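/- arXiv:2304.13674 — 5 statements merged into one kernel-verified Lean document; each statement's English description precedes it below -/
import Mathlib

section
/- There exists an entire map f : ℂ → ℂ that is real (f(ℝ) ⊆ ℝ) and even (f(−z) = f(z)) and transcendental (not a polynomial), such that: (1) the restriction f : ℝ → ℝ is convex; (2) f(ℚ) ⊆ ℚ; (3) the periodic points of the restriction f : f⁻¹(𝔻) ∩ 𝔻 → 𝔻 and of the restriction f : ℝ → ℝ coincide, they all lie in ℚ, and for each such periodic point x of period p one has (f^p)'(x) ∈ ℚ; (4) f : f⁻¹(𝔻) ∩ 𝔻 → 𝔻 is an escaping quadratic-like map that is not conjugate to an affine escaping quadratic-like map. -/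
/-!
The map is `f z = 4 z² - 2 + ∑ dₖ z²ᵏ / k!` with real coefficients `dₖ ∈ [1/100, 3/100]`. For every
such sequence `d`:

* `f` is entire, real and even, it is convex on the real line because its nonconstant Taylor
  coefficients are nonnegative, and transcendental because it grows like `exp (x²)`;
* on the disk `f` is a small perturbation of `4 z² - 2`, so it has two univalent inverse branches
  `±ρ` on the closed disk, and `f⁻¹(𝔻) ∩ 𝔻` is the union of two disjoint copies of `𝔻` in the right
  and left half-planes, on each of which `f` is expanding (`Adm.exists_branch`, `Adm.expand`,
  `Adm.isEscapingQuadLike`). Its periodic points correspond to finite words in the signs `±`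
  (`Adm.exists_cycle`, `Adm.periodic_unique`), and they are all real;
* conversely real points outside `(-1, 1)` escape to infinity, so the real periodic points are the
  same (`Adm.orbit_mem`);
* the restriction is not conjugate to an affine map: evenness would force the multipliers at its two
  fixed points to be opposite, which the numerical bounds exclude (`Adm.not_conjugate`).

It remains to choose `d` such that `f` and `f'` are rational at rational points and every periodic
point is rational (`exists_coeffs`). This is done by successive small perturbations in the Banach
space of bounded sequences. Each step makes one more value and derivative, or one more cycle,
rational while keeping the values and derivatives at finitely many points; a cycle is made rational
by moving its points to nearby rationals and interpolating (`eventually_interpolate`). Since periodic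
points in the disk are determined by their sign words, a rational cycle for each word suffices.
-/

open Function Set Metric

/-- `f : U → V` is an *escaping quadratic-like map*: `U, V` are nonempty open subsets
of `ℂ` with `U` compactly contained in `V`, `V` simply connected, and the restriction of
`f` to `U` is a holomorphic covering map of `V` of degree `2`. -/
structure IsEscapingQuadLike (f : ℂ → ℂ) (U V : Set ℂ) : Prop where
  isOpen_U : IsOpen U
  isOpen_V : IsOpen V
  nonempty_U : U.Nonempty
  nonempty_V : V.Nonempty
  compact_closure : IsCompact (closure U)
  closure_subset : closure U ⊆ V
  simply_connected : SimplyConnectedSpace V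
  holo : DifferentiableOn ℂ f U
  mapsTo : MapsTo f U V
  covering : IsCoveringMap (MapsTo.restrict f U V mapsTo)
  degree_two : ∀ v : V, Nat.card ((MapsTo.restrict f U V mapsTo) ⁻¹' {v}) = 2

/-- An escaping quadratic-like map `f : U → V` is *conjugate to an affine escaping
quadratic-like map* if there is an injective holomorphic map `φ : V → ℂ` such that
`φ ∘ f ∘ φ⁻¹` is affine on each connected component of `φ(U)` (equivalently, for each
connected component of `U` there are `a, b ∈ ℂ` with `φ(f(z)) = a·φ(z) + b` there). -/
def ConjugateToAffineQuadLike (f : ℂ → ℂ) (U V : Set ℂ) : Prop :=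
  ∃ φ : ℂ → ℂ, DifferentiableOn ℂ φ V ∧ InjOn φ V ∧
    ∀ z₀ ∈ U, ∃ a b : ℂ, ∀ z ∈ connectedComponentIn U z₀, φ (f z) = a * φ z + b

/-- The domain `f⁻¹(𝔻) ∩ 𝔻` of the quadratic-like restriction of `f`,
where `𝔻` is the open unit disk. -/
def quadDomain (f : ℂ → ℂ) : Set ℂ :=
  f ⁻¹' (ball (0 : ℂ) 1) ∩ ball (0 : ℂ) 1

section

open scoped BoundedContinuousFunction Nat ComplexConjugate
open Filter Topology

/-! ### Entire functions from bounded coefficient sequences -/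

/-- The exponential generating function `∑ b k * w ^ k / k!` of a bounded real sequence, an entire
function of `w`. Bounded sequences with the sup norm form a Banach space on which `egf` and its
derivatives are continuous for locally uniform convergence. -/
noncomputable def egf (b : ℕ →ᵇ ℝ) (w : ℂ) : ℂ := ∑' k : ℕ, (b k : ℂ) * (w ^ k / (k ! : ℂ))

lemma norm_egf_term_le (b : ℕ →ᵇ ℝ) (w : ℂ) (k : ℕ) :
    ‖(b k : ℂ) * (w ^ k / (k ! : ℂ))‖ ≤ ‖b‖ * (‖w‖ ^ k / (k ! : ℝ)) := by
  rw [norm_mul, norm_div, norm_pow, Complex.norm_natCast, Complex.norm_real]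
  exact mul_le_mul_of_nonneg_right (b.norm_coe_le_norm k) (by positivity)

lemma summable_egf_bound (b : ℕ →ᵇ ℝ) (r : ℝ) :
    Summable fun k : ℕ => ‖b‖ * (r ^ k / (k ! : ℝ)) :=
  (Real.summable_pow_div_factorial r).mul_left _

lemma summable_egf (b : ℕ →ᵇ ℝ) (w : ℂ) :
    Summable fun k : ℕ => (b k : ℂ) * (w ^ k / (k ! : ℂ)) :=
  .of_norm_bounded (summable_egf_bound b ‖w‖) (norm_egf_term_le b w)

lemma norm_egf_le (b : ℕ →ᵇ ℝ) (w : ℂ) : ‖egf b w‖ ≤ ‖b‖ * Real.exp ‖w‖ := by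
  have h : HasSum (fun k : ℕ => ‖b‖ * (‖w‖ ^ k / (k ! : ℝ))) (‖b‖ * Real.exp ‖w‖) := by
    rw [Real.exp_eq_exp_ℝ]
    exact (NormedSpace.expSeries_div_hasSum_exp (𝔸 := ℝ) ‖w‖).mul_left _
  exact tsum_of_norm_bounded h (norm_egf_term_le b w)

lemma egf_sub (b b' : ℕ →ᵇ ℝ) (w : ℂ) : egf (b - b') w = egf b w - egf b' w := by
  unfold egf
  rw [← (summable_egf b w).tsum_sub (summable_egf b' w)]
  congr 1; ext k; simp; ring

lemma egf_add (b b' : ℕ →ᵇ ℝ) (w : ℂ) : egf (b + b') w = egf b w + egf b' w := by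
  unfold egf
  rw [← (summable_egf b w).tsum_add (summable_egf b' w)]
  congr 1; ext k; simp; ring

lemma egf_conj (b : ℕ →ᵇ ℝ) (w : ℂ) : egf b (conj w) = conj (egf b w) := by
  unfold egf
  rw [Complex.conj_tsum]
  congr 1; ext k; simp

/-- The sequence `k ↦ b (k + 1)`, whose generating function is the derivative of that of `b`. -/
noncomputable def shift (b : ℕ →ᵇ ℝ) : ℕ →ᵇ ℝ :=
  b.compContinuous ⟨fun k => k + 1, continuous_of_discreteTopology⟩

@[simp] lemma shift_apply (b : ℕ →ᵇ ℝ) (k : ℕ) : shift b k = b (k + 1) := rfl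

lemma shift_sub (b b' : ℕ →ᵇ ℝ) : shift (b - b') = shift b - shift b' := rfl

lemma shift_add (b b' : ℕ →ᵇ ℝ) : shift (b + b') = shift b + shift b' := rfl

lemma norm_shift_le (b : ℕ →ᵇ ℝ) : ‖shift b‖ ≤ ‖b‖ :=
  (BoundedContinuousFunction.norm_le (norm_nonneg _)).2 fun k => b.norm_coe_le_norm (k + 1)

lemma succ_term (x : ℝ) (k : ℕ) :
    ((k + 1 : ℕ) : ℝ) * x ^ (k + 1 - 1) / ((k + 1)! : ℝ) = x ^ k / (k ! : ℝ) := by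
  rw [Nat.factorial_succ]
  have : (k ! : ℝ) ≠ 0 := by positivity
  have : ((k + 1 : ℕ) : ℝ) ≠ 0 := by positivity
  push_cast at *
  field_simp

lemma hasDerivAt_egf (b : ℕ →ᵇ ℝ) (w : ℂ) : HasDerivAt (egf b) (egf (shift b) w) w := by
  have hu : Summable fun k : ℕ => ‖b‖ * ((k : ℝ) * (‖w‖ + 1) ^ (k - 1) / (k ! : ℝ)) := by
    rw [← summable_nat_add_iff 1]
    simp only [succ_term]
    exact summable_egf_bound b _
  have hw : w ∈ ball (0 : ℂ) (‖w‖ + 1) := by simp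
  have key := hasDerivAt_tsum_of_isPreconnected
    (g := fun (k : ℕ) (y : ℂ) => (b k : ℂ) * (y ^ k / (k ! : ℂ)))
    (g' := fun (k : ℕ) (y : ℂ) => (b k : ℂ) * ((k : ℂ) * y ^ (k - 1) / (k ! : ℂ)))
    hu isOpen_ball (convex_ball (0 : ℂ) (‖w‖ + 1)).isPreconnected
    (fun k y _ => ((hasDerivAt_pow k y).div_const _).const_mul _)
    (fun k y hy => ?_) hw (summable_egf b w) hw
  · convert! key using 1
    have hs : Summable fun k : ℕ => (b k : ℂ) * ((k : ℂ) * w ^ (k - 1) / (k ! : ℂ)) := by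
      refine .of_norm_bounded hu fun k => ?_
      simp only [norm_mul, norm_div, norm_pow, Complex.norm_natCast, Complex.norm_real]
      refine mul_le_mul (b.norm_coe_le_norm k) ?_ (by positivity) (norm_nonneg _)
      gcongr; simp
    rw [hs.tsum_eq_zero_add]
    simp only [Nat.cast_zero, zero_mul, zero_div, mul_zero, zero_add]
    unfold egf
    congr 1; ext k
    rw [shift_apply, Nat.factorial_succ]
    have h1 : (k ! : ℂ) ≠ 0 := by exact_mod_cast k.factorial_ne_zero
    have h2 : ((k + 1 : ℕ) : ℂ) ≠ 0 := by exact_mod_cast k.succ_ne_zero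
    push_cast at *
    field_simp
  · simp only [norm_mul, norm_div, norm_pow, Complex.norm_natCast, Complex.norm_real]
    refine mul_le_mul (b.norm_coe_le_norm k) ?_ (by positivity) (norm_nonneg _)
    have : ‖y‖ ≤ ‖w‖ + 1 := by simpa using (mem_ball.1 hy).le
    gcongr

/-- The restriction of `egf b` to the real line, where it takes real values (`egf_ofReal`). -/
noncomputable def egfR (b : ℕ →ᵇ ℝ) (x : ℝ) : ℝ := (egf b x).re

lemma egf_ofReal (b : ℕ →ᵇ ℝ) (x : ℝ) : egf b (x : ℂ) = (egfR b x : ℂ) := by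
  have h := egf_conj b x
  rw [Complex.conj_ofReal] at h
  exact (Complex.conj_eq_iff_re.1 h.symm).symm

lemma hasSum_egfR (b : ℕ →ᵇ ℝ) (x : ℝ) :
    HasSum (fun k : ℕ => b k * (x ^ k / (k ! : ℝ))) (egfR b x) := by
  have h := Complex.hasSum_re (summable_egf b x).hasSum
  convert! h using 1
  ext k
  norm_cast

lemma egfR_add (b b' : ℕ →ᵇ ℝ) (x : ℝ) : egfR (b + b') x = egfR b x + egfR b' x := by
  simp [egfR, egf_add]

lemma egfR_sub (b b' : ℕ →ᵇ ℝ) (x : ℝ) : egfR (b - b') x = egfR b x - egfR b' x := by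
  simp [egfR, egf_sub]

lemma continuous_egfR (b : ℕ →ᵇ ℝ) : Continuous (egfR b) := by
  have : Continuous (egf b) :=
    continuous_iff_continuousAt.2 fun w => (hasDerivAt_egf b w).continuousAt
  unfold egfR; fun_prop

lemma abs_egfR_le (b : ℕ →ᵇ ℝ) (x : ℝ) : |egfR b x| ≤ ‖b‖ * Real.exp |x| := by
  have h1 := Complex.abs_re_le_norm (egf b x)
  have h2 := norm_egf_le b x
  rw [Complex.norm_real, Real.norm_eq_abs] at h2
  exact h1.trans h2

/-- Evaluation is continuous in the coefficient sequence. -/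
lemma tendsto_egfR {B : ℕ → ℕ →ᵇ ℝ} {b : ℕ →ᵇ ℝ} (h : Tendsto B atTop (𝓝 b)) (x : ℝ) :
    Tendsto (fun n => egfR (B n) x) atTop (𝓝 (egfR b x)) := by
  rw [tendsto_iff_norm_sub_tendsto_zero] at h ⊢
  refine squeeze_zero (fun _ => norm_nonneg _) (fun n => ?_) (by simpa using h.mul_const (Real.exp |x|))
  rw [← egfR_sub]
  exact abs_egfR_le _ _

lemma tendsto_shift {B : ℕ → ℕ →ᵇ ℝ} {b : ℕ →ᵇ ℝ} (h : Tendsto B atTop (𝓝 b)) :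
    Tendsto (fun n => shift (B n)) atTop (𝓝 (shift b)) := by
  rw [tendsto_iff_norm_sub_tendsto_zero] at h ⊢
  refine squeeze_zero (fun _ => norm_nonneg _) (fun n => ?_) h
  rw [← shift_sub]
  exact norm_shift_le _

/-- The coefficient sequence `k ↦ k! * P.coeff k`, whose generating function is `P`. It is written as
a finite sum so that boundedness is automatic. -/
noncomputable def polyCoeff (P : Polynomial ℝ) : ℕ →ᵇ ℝ :=
  ∑ k ∈ Finset.range (P.natDegree + 1), BoundedContinuousFunction.ofNormedAddCommGroupDiscrete
    (fun j => if j = k then (k ! : ℝ) * P.coeff k else 0) |(k ! : ℝ) * P.coeff k|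
    (fun j => by split_ifs; exacts [le_rfl, by rw [norm_zero]; positivity])

lemma polyCoeff_apply (P : Polynomial ℝ) (j : ℕ) : polyCoeff P j = (j ! : ℝ) * P.coeff j := by
  have : polyCoeff P j = ∑ k ∈ Finset.range (P.natDegree + 1),
      if j = k then (k ! : ℝ) * P.coeff k else 0 := by
    simp [polyCoeff]
  rw [this, Finset.sum_ite_eq]
  split_ifs with h
  · rfl
  · rw [Polynomial.coeff_eq_zero_of_natDegree_lt (by simpa using h), mul_zero]

lemma egfR_polyCoeff (P : Polynomial ℝ) (x : ℝ) : egfR (polyCoeff P) x = P.eval x := by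
  have h := hasSum_egfR (polyCoeff P) x
  have h2 := hasSum_sum_of_ne_finset_zero (f := fun k : ℕ => polyCoeff P k * (x ^ k / (k ! : ℝ)))
    (s := Finset.range (P.natDegree + 1)) (L := SummationFilter.unconditional ℕ) (fun k hk => by
      rw [polyCoeff_apply, Polynomial.coeff_eq_zero_of_natDegree_lt (by simpa using hk)]; simp)
  rw [h.unique h2, Polynomial.eval_eq_sum_range]
  refine Finset.sum_congr rfl fun k _ => ?_
  rw [polyCoeff_apply]
  have : (k ! : ℝ) ≠ 0 := by positivity
  field_simp

lemma shift_polyCoeff (P : Polynomial ℝ) : shift (polyCoeff P) = polyCoeff (Polynomial.derivative P) := by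
  ext k
  rw [shift_apply, polyCoeff_apply, polyCoeff_apply, Polynomial.coeff_derivative, Nat.factorial_succ]
  push_cast; ring

/-- Polynomials of bounded degree with coefficients tending to zero are small perturbations. -/
lemma tendsto_norm_polyCoeff {P : ℕ → Polynomial ℝ} {D : ℕ} (hD : ∀ n, (P n).natDegree ≤ D)
    (hP : ∀ k, Tendsto (fun n => (P n).coeff k) atTop (𝓝 0)) :
    Tendsto (fun n => ‖polyCoeff (P n)‖) atTop (𝓝 0) := by
  have h : Tendsto (fun n => ∑ k ∈ Finset.range (D + 1), (k ! : ℝ) * |(P n).coeff k|) atTop (𝓝 0) := by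
    have := tendsto_finsetSum (Finset.range (D + 1))
      (fun k _ => ((hP k).abs.const_mul (k ! : ℝ)))
    simpa using this
  refine squeeze_zero (fun _ => norm_nonneg _) (fun n => ?_) h
  refine (BoundedContinuousFunction.norm_le (by positivity)).2 fun j => ?_
  rw [polyCoeff_apply, Real.norm_eq_abs, abs_mul, abs_of_nonneg (by positivity : (0 : ℝ) ≤ (j ! : ℝ))]
  by_cases hj : j < D + 1
  · exact Finset.single_le_sum (f := fun k => (k ! : ℝ) * |(P n).coeff k|)
      (fun k _ => by positivity) (Finset.mem_range.2 hj)
  · rw [Polynomial.coeff_eq_zero_of_natDegree_lt (by have := hD n; omega)]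
    simp; positivity

/-! ### Small interpolating polynomials -/

/-- Coefficientwise convergence of a sequence of real polynomials. -/
def CoeffTendsto (F : ℕ → Polynomial ℝ) (P : Polynomial ℝ) : Prop :=
  ∀ k, Tendsto (fun n => (F n).coeff k) atTop (𝓝 (P.coeff k))

lemma CoeffTendsto.const (P : Polynomial ℝ) : CoeffTendsto (fun _ => P) P :=
  fun _ => tendsto_const_nhds

lemma CoeffTendsto.mul {F F' : ℕ → Polynomial ℝ} {P P' : Polynomial ℝ} (h : CoeffTendsto F P)
    (h' : CoeffTendsto F' P') : CoeffTendsto (fun n => F n * F' n) (P * P') := by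
  intro k
  simp only [Polynomial.coeff_mul]
  exact tendsto_finsetSum _ fun i _ => (h i.1).mul (h' i.2)

lemma CoeffTendsto.sum {ι : Type*} {s : Finset ι} {F : ℕ → ι → Polynomial ℝ}
    {P : ι → Polynomial ℝ} (h : ∀ i ∈ s, CoeffTendsto (fun n => F n i) (P i)) :
    CoeffTendsto (fun n => ∑ i ∈ s, F n i) (∑ i ∈ s, P i) := by
  intro k
  simp only [Polynomial.finsetSum_coeff]
  exact tendsto_finsetSum _ fun i hi => h i hi k

lemma CoeffTendsto.prod {ι : Type*} {s : Finset ι} {F : ℕ → ι → Polynomial ℝ}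
    {P : ι → Polynomial ℝ} (h : ∀ i ∈ s, CoeffTendsto (fun n => F n i) (P i)) :
    CoeffTendsto (fun n => ∏ i ∈ s, F n i) (∏ i ∈ s, P i) := by
  classical
  induction s using Finset.induction_on with
  | empty => simpa using CoeffTendsto.const 1
  | insert a s ha ih =>
    simp only [Finset.prod_insert ha]
    exact (h a (by simp)).mul (ih fun i hi => h i (by simp [hi]))

lemma CoeffTendsto.C {c : ℕ → ℝ} {a : ℝ} (h : Tendsto c atTop (𝓝 a)) :
    CoeffTendsto (fun n => Polynomial.C (c n)) (Polynomial.C a) := by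
  intro k
  simp only [Polynomial.coeff_C]
  split_ifs
  · exact h
  · exact tendsto_const_nhds

lemma CoeffTendsto.X_sub_C_sq {c : ℕ → ℝ} {a : ℝ} (h : Tendsto c atTop (𝓝 a)) :
    CoeffTendsto (fun n => (Polynomial.X - Polynomial.C (c n)) ^ 2)
      ((Polynomial.X - Polynomial.C a) ^ 2) := by
  have h1 : CoeffTendsto (fun n => Polynomial.X - Polynomial.C (c n))
      (Polynomial.X - Polynomial.C a) := by
    intro k
    simp only [Polynomial.coeff_sub]
    exact tendsto_const_nhds.sub (CoeffTendsto.C h k)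
  simpa only [pow_two] using h1.mul h1

/-- A double zero is a zero of the polynomial and of its derivative. -/
lemma eval_eq_zero_of_sq_dvd {P : Polynomial ℝ} {u : ℝ}
    (h : (Polynomial.X - Polynomial.C u) ^ 2 ∣ P) :
    P.eval u = 0 ∧ (Polynomial.derivative P).eval u = 0 := by
  obtain ⟨Q, rfl⟩ := h
  simp [Polynomial.derivative_mul, Polynomial.derivative_pow]

/-- The polynomial with double zeros at the points of `N` and at the nodes `ξ j`,
`j ∈ M`, `j ≠ y`. -/
noncomputable def nodePoly (N M : Finset ℝ) (ξ : ℝ → ℝ) (y : ℝ) : Polynomial ℝ :=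
  (∏ j ∈ M.erase y, (Polynomial.X - Polynomial.C (ξ j)) ^ 2) *
    ∏ u ∈ N, (Polynomial.X - Polynomial.C u) ^ 2

lemma natDegree_nodePoly_le (N M : Finset ℝ) (ξ : ℝ → ℝ) (y : ℝ) :
    (nodePoly N M ξ y).natDegree ≤ 2 * (M.card + N.card) := by
  unfold nodePoly
  refine Polynomial.natDegree_mul_le.trans ?_
  have h : ∀ (s : Finset ℝ) (η : ℝ → ℝ),
      (∏ j ∈ s, (Polynomial.X - Polynomial.C (η j)) ^ 2).natDegree ≤ 2 * s.card := by
    intro s η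
    refine (Polynomial.natDegree_prod_le _ _).trans ?_
    refine (Finset.sum_le_card_nsmul _ _ 2 fun j _ => ?_).trans (by simp [mul_comm])
    refine Polynomial.natDegree_pow_le.trans ?_
    simp
  have h1 := h (M.erase y) ξ
  have h2 := h N id
  have h3 := Finset.card_erase_le (s := M) (a := y)
  simp only [id] at h2
  omega

lemma sq_dvd_nodePoly_of_mem {N M : Finset ℝ} {ξ : ℝ → ℝ} {y u : ℝ} (hu : u ∈ N) :
    (Polynomial.X - Polynomial.C u) ^ 2 ∣ nodePoly N M ξ y :=
  (Finset.dvd_prod_of_mem (fun u => (Polynomial.X - Polynomial.C u) ^ 2) hu).mul_left _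

lemma sq_dvd_nodePoly_of_ne {N M : Finset ℝ} {ξ : ℝ → ℝ} {y j : ℝ} (hj : j ∈ M) (hjy : j ≠ y) :
    (Polynomial.X - Polynomial.C (ξ j)) ^ 2 ∣ nodePoly N M ξ y :=
  (Finset.dvd_prod_of_mem (fun j => (Polynomial.X - Polynomial.C (ξ j)) ^ 2)
    (Finset.mem_erase.2 ⟨hjy, hj⟩)).mul_right _

lemma eval_nodePoly (N M : Finset ℝ) (ξ : ℝ → ℝ) (y x : ℝ) :
    (nodePoly N M ξ y).eval x = (∏ j ∈ M.erase y, (x - ξ j) ^ 2) * ∏ u ∈ N, (x - u) ^ 2 := by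
  simp [nodePoly, Polynomial.eval_prod]

/-- A sequence of rationals tending to `y`, constant if `y` is rational. -/
lemma exists_rat_seq (y : ℝ) : ∃ s : ℕ → ℚ, Tendsto (fun n => (s n : ℝ)) atTop (𝓝 y) ∧
    ∀ q : ℚ, y = q → ∀ n, s n = q := by
  by_cases h : ∃ q : ℚ, y = q
  · obtain ⟨q, rfl⟩ := h
    exact ⟨fun _ => q, tendsto_const_nhds, fun q' h' _ => by exact_mod_cast h'⟩
  · obtain ⟨s, -, -, hs⟩ :=
      (Rat.denseRange_cast (𝕜 := ℝ)).exists_seq_strictMono_tendsto Rat.cast_mono y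
    exact ⟨s, hs, fun q hq => (h ⟨q, hq⟩).elim⟩

/-- Interpolation with moving nodes. If the nodes `ξ n y` converge to distinct points `ζ y` outside
`N`, and the prescribed values `v n y` are asymptotic to the present values `egfR d (ξ n y)`, then
for large `n` an arbitrarily small perturbation of `d` takes the prescribed values at the nodes with
rational derivatives there, without changing values or derivatives on `N`. The perturbation is
`P + Q`, where `P` corrects the values by a Lagrange-type formula with double zeros on `N`, and `Q`
vanishes at the nodes, also has double zeros on `N`, and moves the derivatives to nearby
rationals. -/
theorem eventually_interpolate (d : ℕ →ᵇ ℝ) (N M : Finset ℝ) (ξ v : ℕ → ℝ → ℝ) (ζ : ℝ → ℝ)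
    (hξ : ∀ y ∈ M, Tendsto (fun n => ξ n y) atTop (𝓝 (ζ y)))
    (hinj : InjOn ζ M) (hN : ∀ y ∈ M, ζ y ∉ N)
    (hv : ∀ y ∈ M, Tendsto (fun n => v n y - egfR d (ξ n y)) atTop (𝓝 0))
    {ε : ℝ} (hε : 0 < ε) :
    ∀ᶠ n in atTop, ∃ d' : ℕ →ᵇ ℝ, ‖d' - d‖ < ε ∧
      (∀ u ∈ N, egfR d' u = egfR d u ∧ egfR (shift d') u = egfR (shift d) u) ∧
      ∀ y ∈ M, egfR d' (ξ n y) = v n y ∧ ∃ q : ℚ, egfR (shift d') (ξ n y) = q := by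
  classical
  have hL : ∀ y ∈ M, CoeffTendsto (fun n => nodePoly N M (ξ n) y) (nodePoly N M ζ y) := by
    intro y hy
    exact (CoeffTendsto.prod fun j hj =>
      CoeffTendsto.X_sub_C_sq (hξ j (Finset.mem_of_mem_erase hj))).mul (CoeffTendsto.const _)
  have hev : ∀ y ∈ M, Tendsto (fun n => (nodePoly N M (ξ n) y).eval (ξ n y)) atTop
      (𝓝 ((nodePoly N M ζ y).eval (ζ y))) := by
    intro y hy
    simp only [eval_nodePoly]
    refine (tendsto_finsetProd _ fun j hj => ?_).mul (tendsto_finsetProd _ fun u _ => ?_)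
    · exact ((hξ y hy).sub (hξ j (Finset.mem_of_mem_erase hj))).pow 2
    · exact ((hξ y hy).sub tendsto_const_nhds).pow 2
  have hne : ∀ y ∈ M, (nodePoly N M ζ y).eval (ζ y) ≠ 0 := by
    intro y hy
    rw [eval_nodePoly]
    refine mul_ne_zero (Finset.prod_ne_zero_iff.2 fun j hj => pow_ne_zero _ (sub_ne_zero.2 ?_))
      (Finset.prod_ne_zero_iff.2 fun u hu => pow_ne_zero _ (sub_ne_zero.2 ?_))
    · intro h
      exact (Finset.ne_of_mem_erase hj) (hinj hy (Finset.mem_of_mem_erase hj) h).symm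
    · rintro h; exact hN y hy (h ▸ hu)
  have hevne : ∀ᶠ n in atTop, ∀ y ∈ M, (nodePoly N M (ξ n) y).eval (ξ n y) ≠ 0 :=
    (Filter.eventually_all_finset _).2 fun y hy => (hev y hy).eventually_ne (hne y hy)
  -- the value correction; its coefficients tend to zero while its degree stays bounded
  set P : ℕ → Polynomial ℝ := fun n => ∑ y ∈ M,
    Polynomial.C ((v n y - egfR d (ξ n y)) / (nodePoly N M (ξ n) y).eval (ξ n y)) *
      nodePoly N M (ξ n) y with hP
  have hPD : ∀ n, (P n).natDegree ≤ 2 * (M.card + N.card) := fun n =>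
    Polynomial.natDegree_sum_le_of_forall_le _ _ fun y _ =>
      (Polynomial.natDegree_C_mul_le _ _).trans (natDegree_nodePoly_le _ _ _ _)
  have hP0 : ∀ k, Tendsto (fun n => (P n).coeff k) atTop (𝓝 0) := by
    have : CoeffTendsto P (∑ y ∈ M, Polynomial.C 0 * nodePoly N M ζ y) :=
      CoeffTendsto.sum fun y hy => (CoeffTendsto.C (by
        have h := (hv y hy).div (hev y hy) (hne y hy)
        rw [zero_div] at h
        exact h)).mul (hL y hy)
    simpa [CoeffTendsto] using this
  have hsmall := (tendsto_norm_polyCoeff hPD hP0).eventually_lt_const (half_pos hε)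
  filter_upwards [hevne, hsmall] with n hn1 hn2
  set L := nodePoly N M (ξ n) with hLdef
  have hLN : ∀ y, ∀ u ∈ N, (L y).eval u = 0 ∧ (Polynomial.derivative (L y)).eval u = 0 :=
    fun y u hu => eval_eq_zero_of_sq_dvd (sq_dvd_nodePoly_of_mem hu)
  have hLM : ∀ y, ∀ j ∈ M, j ≠ y → (L y).eval (ξ n j) = 0 ∧
      (Polynomial.derivative (L y)).eval (ξ n j) = 0 :=
    fun y j hj hjy => eval_eq_zero_of_sq_dvd (sq_dvd_nodePoly_of_ne hj hjy)
  set d₁ := d + polyCoeff (P n) with hd₁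
  choose s hs _ using fun y => exists_rat_seq (egfR (shift d₁) (ξ n y))
  -- the derivative correction, for fixed `n`, along rationals `s y m` tending to the derivative
  set Q : ℕ → Polynomial ℝ := fun m => ∑ y ∈ M,
    Polynomial.C ((s y m - egfR (shift d₁) (ξ n y)) / (L y).eval (ξ n y)) *
      ((Polynomial.X - Polynomial.C (ξ n y)) * L y) with hQ
  have hQD : ∀ m, (Q m).natDegree ≤ 1 + 2 * (M.card + N.card) := fun m =>
    Polynomial.natDegree_sum_le_of_forall_le _ _ fun y _ =>
      (Polynomial.natDegree_C_mul_le _ _).trans (Polynomial.natDegree_mul_le.trans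
        (add_le_add (by simp) (natDegree_nodePoly_le _ _ _ _)))
  have hQ0 : ∀ k, Tendsto (fun m => (Q m).coeff k) atTop (𝓝 0) := by
    have : CoeffTendsto Q (∑ y ∈ M, Polynomial.C 0 *
        ((Polynomial.X - Polynomial.C (ξ n y)) * L y)) :=
      CoeffTendsto.sum fun y hy => (CoeffTendsto.C (by
        have := ((hs y).sub_const (egfR (shift d₁) (ξ n y))).div_const ((L y).eval (ξ n y))
        simpa using this)).mul (CoeffTendsto.const _)
    simpa [CoeffTendsto] using this
  obtain ⟨m, hm⟩ := ((tendsto_norm_polyCoeff hQD hQ0).eventually_lt_const (half_pos hε)).exists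
  refine ⟨d₁ + polyCoeff (Q m), ?_, fun u hu => ⟨?_, ?_⟩, fun y hy => ⟨?_, s y m, ?_⟩⟩
  · have : d₁ + polyCoeff (Q m) - d = polyCoeff (P n) + polyCoeff (Q m) := by
      rw [hd₁]; abel
    rw [this]
    exact (norm_add_le _ _).trans_lt (by linarith)
  · rw [hd₁, egfR_add, egfR_add, egfR_polyCoeff, egfR_polyCoeff, hP, hQ]
    simp [Polynomial.eval_finsetSum, ← hLdef, hLN _ u hu]
  · rw [hd₁, shift_add, shift_add, egfR_add, egfR_add, shift_polyCoeff, shift_polyCoeff,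
      egfR_polyCoeff, egfR_polyCoeff, hP, hQ]
    simp [Polynomial.eval_finsetSum, Polynomial.derivative_mul, ← hLdef, hLN _ u hu]
  · rw [hd₁, egfR_add, egfR_add, egfR_polyCoeff, egfR_polyCoeff, hP, hQ]
    simp only [Polynomial.eval_finsetSum, Polynomial.eval_mul, Polynomial.eval_C]
    rw [Finset.sum_eq_single_of_mem y hy fun j _ hj => by rw [(hLM j y hy hj.symm).1, mul_zero],
      Finset.sum_eq_zero fun j hj => ?_]
    · rw [div_mul_cancel₀ _ (hn1 y hy)]; ring
    · by_cases h : y = j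
      · subst h; simp
      · rw [(hLM j y hy h).1]; simp
  · rw [shift_add, egfR_add, shift_polyCoeff, egfR_polyCoeff, hQ]
    simp only [Polynomial.derivative_sum, Polynomial.eval_finsetSum, Polynomial.derivative_mul,
      Polynomial.eval_mul, Polynomial.eval_C, Polynomial.derivative_C, Polynomial.eval_add]
    rw [Finset.sum_eq_single_of_mem y hy fun j _ hj => by
      rw [(hLM j y hy hj.symm).1, (hLM j y hy hj.symm).2]; simp]
    simp
    rw [div_mul_cancel₀ _ (hn1 y hy)]; ring

/-! ### The maps and their inverse branches -/

/-- Admissible coefficients, all in `[1/100, 3/100]`: the lower bound gives convexity and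
transcendence, the upper bound makes `quadMap d` a small perturbation of `4 z ^ 2 - 2` on the disk. -/
def Adm (d : ℕ →ᵇ ℝ) : Prop := ∀ k, 1 / 100 ≤ d k ∧ d k ≤ 3 / 100

/-- The even entire map `z ↦ 4 z² - 2 + egf d (z²)`. -/
noncomputable def quadMap (d : ℕ →ᵇ ℝ) (z : ℂ) : ℂ := 4 * z ^ 2 - 2 + egf d (z ^ 2)

/-- The restriction of `quadMap d` to the real line (`quadMap_ofReal`). -/
noncomputable def quadMapR (d : ℕ →ᵇ ℝ) (x : ℝ) : ℝ := 4 * x ^ 2 - 2 + egfR d (x ^ 2)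

lemma quadMap_ofReal (d : ℕ →ᵇ ℝ) (x : ℝ) : quadMap d x = (quadMapR d x : ℂ) := by
  unfold quadMap quadMapR
  rw [← Complex.ofReal_pow, egf_ofReal]
  push_cast; ring

lemma quadMap_iterate_ofReal (d : ℕ →ᵇ ℝ) (n : ℕ) (x : ℝ) :
    (quadMap d)^[n] x = ((quadMapR d)^[n] x : ℝ) := by
  induction n with
  | zero => rfl
  | succ n ih => rw [iterate_succ_apply', iterate_succ_apply', ih, quadMap_ofReal]

lemma quadMap_conj (d : ℕ →ᵇ ℝ) (z : ℂ) : quadMap d (conj z) = conj (quadMap d z) := by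
  unfold quadMap
  rw [← map_pow, egf_conj]
  simp [map_ofNat]

lemma quadMap_neg (d : ℕ →ᵇ ℝ) (z : ℂ) : quadMap d (-z) = quadMap d z := by
  simp [quadMap]

lemma quadMapR_neg (d : ℕ →ᵇ ℝ) (x : ℝ) : quadMapR d (-x) = quadMapR d x := by
  simp [quadMapR]

lemma hasDerivAt_quadMap (d : ℕ →ᵇ ℝ) (z : ℂ) :
    HasDerivAt (quadMap d) (2 * z * (4 + egf (shift d) (z ^ 2))) z := by
  have h2 : HasDerivAt (fun z : ℂ => z ^ 2) (2 * z) z := by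
    simpa using hasDerivAt_pow 2 z
  have := ((h2.const_mul 4).sub_const 2).add ((hasDerivAt_egf d (z ^ 2)).comp z h2)
  convert! this using 1
  ring

lemma differentiable_quadMap (d : ℕ →ᵇ ℝ) : Differentiable ℂ (quadMap d) :=
  fun z => (hasDerivAt_quadMap d z).differentiableAt

lemma Adm.shift {d : ℕ →ᵇ ℝ} (h : Adm d) : Adm (shift d) := fun k => h (k + 1)

lemma Adm.norm_le {d : ℕ →ᵇ ℝ} (h : Adm d) : ‖d‖ ≤ 3 / 100 :=
  (BoundedContinuousFunction.norm_le (by norm_num)).2 fun k => by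
    rw [Real.norm_eq_abs, abs_le]; constructor <;> linarith [(h k).1, (h k).2]

lemma Adm.norm_egf_le {d : ℕ →ᵇ ℝ} (h : Adm d) {w : ℂ} (hw : ‖w‖ ≤ 1) : ‖egf d w‖ ≤ 1 / 10 := by
  have h1 := _root_.norm_egf_le d w
  have h2 : Real.exp ‖w‖ ≤ 3 := (Real.exp_le_exp.2 hw).trans (by
    have := Real.exp_one_lt_d9; linarith)
  have h3 := h.norm_le
  have h4 : ‖d‖ * Real.exp ‖w‖ ≤ 3 / 100 * 3 :=
    mul_le_mul h3 h2 (Real.exp_pos _).le (by norm_num)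
  linarith

lemma Adm.abs_egfR_le {d : ℕ →ᵇ ℝ} (h : Adm d) {x : ℝ} (hx : |x| ≤ 1) : |egfR d x| ≤ 1 / 10 := by
  have h1 := Complex.abs_re_le_norm (egf d x)
  have h2 := h.norm_egf_le (w := x) (by simpa using hx)
  exact h1.trans h2

lemma Adm.lipschitz {d : ℕ →ᵇ ℝ} (h : Adm d) {w w' : ℂ} (hw : ‖w‖ ≤ 1) (hw' : ‖w'‖ ≤ 1) :
    ‖egf d w - egf d w'‖ ≤ 1 / 10 * ‖w - w'‖ :=
  (convex_closedBall (0 : ℂ) 1).norm_image_sub_le_of_norm_hasDerivWithin_le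
    (fun x _ => (hasDerivAt_egf d x).hasDerivWithinAt)
    (fun x hx => h.shift.norm_egf_le (by simpa using hx)) (by simpa using hw') (by simpa using hw)

/-- If `z` and `quadMap d z` lie in the closed disk, then `z²` is close to `1/2 + v/4` where
`v = quadMap d z`; in particular `z` is away from both the imaginary axis and the unit circle. -/
lemma Adm.bounds {d : ℕ →ᵇ ℝ} (h : Adm d) {z : ℂ} (hz : ‖z‖ ≤ 1) (hF : ‖quadMap d z‖ ≤ 1) :
    9 / 40 ≤ (z ^ 2).re ∧ ‖z‖ ^ 2 ≤ 31 / 40 := by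
  have hz2 : ‖z ^ 2‖ ≤ 1 := by rw [norm_pow]; exact pow_le_one₀ (norm_nonneg _) hz
  have h1 := h.norm_egf_le hz2
  have e : 4 * z ^ 2 = quadMap d z + 2 - egf d (z ^ 2) := by unfold quadMap; ring
  constructor
  · have e2 := congrArg Complex.re e
    have h2 := (abs_le.1 ((Complex.abs_re_le_norm _).trans h1)).2
    have h3 := (abs_le.1 ((Complex.abs_re_le_norm _).trans hF)).1
    simp only [Complex.sub_re, Complex.add_re] at e2
    have : (4 * z ^ 2).re = 4 * (z ^ 2).re := by simp
    have : (2 : ℂ).re = 2 := rfl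
    linarith
  · have e2 := congrArg norm e
    have h2 := norm_sub_le (quadMap d z + 2) (egf d (z ^ 2))
    have h3 := norm_add_le (quadMap d z) 2
    rw [norm_mul, norm_pow] at e2
    have : ‖(4 : ℂ)‖ = 4 := by simp
    have : ‖(2 : ℂ)‖ = 2 := by simp
    rw [← e2] at h2
    nlinarith

lemma Adm.re_bound {d : ℕ →ᵇ ℝ} (h : Adm d) {z : ℂ} (hz : ‖z‖ ≤ 1) (hF : ‖quadMap d z‖ ≤ 1) :
    2 / 5 ≤ |z.re| := by
  have h1 := (h.bounds hz hF).1
  rw [pow_two, Complex.mul_re] at h1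
  refine abs_le_of_sq_le_sq' ?_ (abs_nonneg _) |>.2
  rw [sq_abs]
  nlinarith [mul_self_nonneg z.im]

/-- On each of the two halves `0 < re z` and `re z < 0` of its domain, `quadMap d` expands distances
by a factor `3`. -/
lemma Adm.expand {d : ℕ →ᵇ ℝ} (h : Adm d) {z z' : ℂ} (hz : ‖z‖ ≤ 1) (hF : ‖quadMap d z‖ ≤ 1)
    (hz' : ‖z'‖ ≤ 1) (hF' : ‖quadMap d z'‖ ≤ 1) (hs : 0 < z.re ↔ 0 < z'.re) :
    3 * ‖z - z'‖ ≤ ‖quadMap d z - quadMap d z'‖ := by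
  have hz2 : ‖z ^ 2‖ ≤ 1 := by rw [norm_pow]; exact pow_le_one₀ (norm_nonneg _) hz
  have hz2' : ‖z' ^ 2‖ ≤ 1 := by rw [norm_pow]; exact pow_le_one₀ (norm_nonneg _) hz'
  have h1 := h.lipschitz hz2 hz2'
  have e : quadMap d z - quadMap d z' =
      4 * (z ^ 2 - z' ^ 2) + (egf d (z ^ 2) - egf d (z' ^ 2)) := by unfold quadMap; ring
  have h2 : 4 * ‖z ^ 2 - z' ^ 2‖ ≤ ‖quadMap d z - quadMap d z'‖ + ‖egf d (z ^ 2) - egf d (z' ^ 2)‖ := by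
    have : 4 * (z ^ 2 - z' ^ 2) = quadMap d z - quadMap d z' - (egf d (z ^ 2) - egf d (z' ^ 2)) := by
      rw [e]; ring
    calc 4 * ‖z ^ 2 - z' ^ 2‖ = ‖4 * (z ^ 2 - z' ^ 2)‖ := by simp
      _ ≤ _ := by rw [this]; exact norm_sub_le _ _
  have h3 : ‖z ^ 2 - z' ^ 2‖ = ‖z - z'‖ * ‖z + z'‖ := by rw [← norm_mul]; congr 1; ring
  have h4 : 4 / 5 ≤ ‖z + z'‖ := by
    refine le_trans ?_ (Complex.abs_re_le_norm _)
    have a1 := h.re_bound hz hF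
    have a2 := h.re_bound hz' hF'
    rw [Complex.add_re]
    by_cases hp : 0 < z.re
    · have hp' := hs.1 hp
      rw [abs_of_pos hp] at a1
      rw [abs_of_pos hp'] at a2
      rw [abs_of_pos (by linarith)]; linarith
    · have hp' := fun q => hp (hs.2 q)
      rw [abs_of_nonpos (not_lt.1 hp)] at a1
      rw [abs_of_nonpos (not_lt.1 hp')] at a2
      rw [abs_of_nonpos (by linarith)]; linarith
  rw [h3] at h1 h2
  have h5 := mul_le_mul_of_nonneg_left h4 (norm_nonneg (z - z'))
  nlinarith [norm_nonneg (z - z'), h5, h1, h2]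

/-- Each point of the closed disk has a preimage in the right half of the disk: the equation
`4 w - 2 + egf d w = v` for `w = z²` is solved by a contraction. -/
lemma Adm.exists_root {d : ℕ →ᵇ ℝ} (h : Adm d) {v : ℂ} (hv : ‖v‖ ≤ 1) :
    ∃ z : ℂ, 0 < z.re ∧ ‖z‖ < 1 ∧ quadMap d z = v := by
  set T : ℂ → ℂ := fun w => (v + 2 - egf d w) / 4 with hT
  have hmaps : MapsTo T (closedBall 0 1) (closedBall 0 1) := by
    intro w hw
    rw [mem_closedBall_zero_iff] at hw ⊢
    have h1 := h.norm_egf_le hw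
    rw [hT, norm_div]
    have : ‖v + 2 - egf d w‖ ≤ 1 + 2 + 1 / 10 :=
      (norm_sub_le _ _).trans (add_le_add ((norm_add_le _ _).trans (add_le_add hv (by simp))) h1)
    have h4 : ‖(4 : ℂ)‖ = 4 := by simp
    rw [h4]; linarith
  have hc : ContractingWith (1 / 2) (hmaps.restrict T _ _) := by
    refine ⟨by rw [← NNReal.coe_lt_coe]; norm_num, LipschitzWith.of_dist_le_mul fun a b => ?_⟩
    have ha := mem_closedBall_zero_iff.1 a.2
    have hb := mem_closedBall_zero_iff.1 b.2
    have h1 := h.lipschitz ha hb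
    rw [Subtype.dist_eq, Subtype.dist_eq, MapsTo.val_restrict_apply, MapsTo.val_restrict_apply,
      dist_eq_norm, dist_eq_norm]
    have : T a - T b = -(egf d a - egf d b) / 4 := by rw [hT]; ring
    have h4 : ‖(4 : ℂ)‖ = 4 := by simp
    rw [this, norm_div, norm_neg, h4]
    push_cast
    nlinarith [norm_nonneg ((a : ℂ) - b)]
  obtain ⟨w, hw, hfix, -⟩ := hc.exists_fixedPoint' isClosed_closedBall.isComplete hmaps
    (mem_closedBall_self zero_le_one) (edist_ne_top _ _)
  obtain ⟨z, rfl⟩ := IsAlgClosed.exists_pow_nat_eq w two_pos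
  have hz : ‖z‖ ≤ 1 := by
    rw [mem_closedBall_zero_iff, norm_pow] at hw
    exact (pow_le_one_iff_of_nonneg (norm_nonneg _) two_ne_zero).1 hw
  have hFz : quadMap d z = v := by
    have : (v + 2 - egf d (z ^ 2)) / 4 = z ^ 2 := hfix
    unfold quadMap
    rw [← this]
    rw [this]
    linear_combination (-4) * this
  have hz1 : ‖z‖ < 1 := by
    have := (h.bounds hz (by rwa [hFz])).2
    nlinarith [norm_nonneg z]
  have hre := h.re_bound hz (by rwa [hFz])
  rcases lt_or_ge 0 z.re with hp | hp
  · exact ⟨z, hp, hz1, hFz⟩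
  · refine ⟨-z, ?_, by simpa using hz1, by rw [quadMap_neg, hFz]⟩
    rw [abs_of_nonpos hp] at hre
    rw [Complex.neg_re]; linarith

/-- The inverse branch of `quadMap d` on the closed disk with values in the right half-plane; the other
branch is its negative. -/
lemma Adm.exists_branch {d : ℕ →ᵇ ℝ} (h : Adm d) : ∃ ρ : ℂ → ℂ,
    (∀ v, ‖v‖ ≤ 1 → 0 < (ρ v).re ∧ ‖ρ v‖ < 1 ∧ quadMap d (ρ v) = v) ∧
    ContinuousOn ρ (closedBall 0 1) ∧ ∀ v, ‖v‖ ≤ 1 → ∀ z, ‖z‖ ≤ 1 → 0 < z.re →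
      quadMap d z = v → z = ρ v := by
  have : ∀ v : ℂ, ∃ z, ‖v‖ ≤ 1 → 0 < z.re ∧ ‖z‖ < 1 ∧ quadMap d z = v := by
    intro v
    by_cases hv : ‖v‖ ≤ 1
    · obtain ⟨z, hz⟩ := h.exists_root hv
      exact ⟨z, fun _ => hz⟩
    · exact ⟨0, fun hv' => (hv hv').elim⟩
  choose ρ hρ using this
  refine ⟨ρ, hρ, ?_, ?_⟩
  · have : LipschitzOnWith 1 ρ (closedBall 0 1) := by
      refine LipschitzOnWith.of_dist_le_mul fun a ha b hb => ?_
      rw [mem_closedBall_zero_iff] at ha hb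
      obtain ⟨a1, a2, a3⟩ := hρ a ha
      obtain ⟨b1, b2, b3⟩ := hρ b hb
      have := h.expand a2.le (by rwa [a3]) b2.le (by rwa [b3]) (by simp [a1, b1])
      rw [a3, b3] at this
      rw [dist_eq_norm, dist_eq_norm, NNReal.coe_one, one_mul]
      linarith [norm_nonneg (ρ a - ρ b)]
    exact this.continuousOn
  · intro v hv z hz hz0 hzv
    obtain ⟨a1, a2, a3⟩ := hρ v hv
    have := h.expand hz (by rwa [hzv]) a2.le (by rwa [a3]) (by simp [a1, hz0])
    rw [a3, hzv, sub_self, norm_zero] at this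
    have : ‖z - ρ v‖ = 0 := le_antisymm (by linarith) (norm_nonneg _)
    exact sub_eq_zero.1 (norm_eq_zero.1 this)

/-- By expansion, a periodic point of given period is determined by the signs of the real parts along
its orbit. -/
lemma Adm.periodic_unique {d : ℕ →ᵇ ℝ} (h : Adm d) {p : ℕ} (hp : 1 ≤ p) {z z' : ℂ}
    (hz : ∀ k < p, (quadMap d)^[k] z ∈ quadDomain (quadMap d))
    (hz' : ∀ k < p, (quadMap d)^[k] z' ∈ quadDomain (quadMap d))
    (hs : ∀ k < p, (0 < ((quadMap d)^[k] z).re ↔ 0 < ((quadMap d)^[k] z').re))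
    (hfix : (quadMap d)^[p] z = z) (hfix' : (quadMap d)^[p] z' = z') : z = z' := by
  have key : ∀ k ≤ p, 3 ^ k * ‖z - z'‖ ≤ ‖(quadMap d)^[k] z - (quadMap d)^[k] z'‖ := by
    intro k hk
    induction k with
    | zero => simp
    | succ k ih =>
      have h1 := ih (by omega)
      obtain ⟨a1, a2⟩ := hz k (by omega)
      obtain ⟨b1, b2⟩ := hz' k (by omega)
      rw [mem_preimage] at a1 b1
      rw [mem_ball_zero_iff] at a1 a2 b1 b2
      have := h.expand a2.le a1.le b2.le b1.le (hs k (by omega))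
      rw [iterate_succ_apply', iterate_succ_apply', pow_succ]
      linarith
  have h1 := key p le_rfl
  rw [hfix, hfix'] at h1
  have h3 : (3 : ℝ) ≤ 3 ^ p := le_self_pow₀ (by norm_num) (by omega)
  have : ‖z - z'‖ = 0 := by
    refine le_antisymm ?_ (norm_nonneg _)
    nlinarith [norm_nonneg (z - z')]
  exact sub_eq_zero.1 (norm_eq_zero.1 this)

/-- The two real inverse branches on `[-1, 1]`, indexed by the sign of their values. -/
lemma Adm.exists_branchR {d : ℕ →ᵇ ℝ} (h : Adm d) (e : Bool) : ∃ ψ : ℝ → ℝ,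
    ContinuousOn ψ (Icc (-1) 1) ∧ MapsTo ψ (Icc (-1) 1) (Icc (-1) 1) ∧
    ∀ v ∈ Icc (-1 : ℝ) 1, quadMapR d (ψ v) = v ∧ (0 < ψ v ↔ e = true) := by
  obtain ⟨ρ, hρ, hcont, huniq⟩ := h.exists_branch
  have hreal : ∀ v ∈ Icc (-1 : ℝ) 1, ((ρ v).re : ℂ) = ρ v ∧ 0 < (ρ v).re ∧
      (ρ v).re ≤ 1 ∧ quadMapR d (ρ v).re = v := by
    intro v hv
    have hv1 : ‖(v : ℂ)‖ ≤ 1 := by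
      rw [Complex.norm_real, Real.norm_eq_abs, abs_le]; exact hv
    obtain ⟨a1, a2, a3⟩ := hρ v hv1
    have e1 : conj (ρ v) = ρ v := huniq v hv1 _ (by simpa using a2.le) (by simpa using a1)
      (by rw [quadMap_conj, a3, Complex.conj_ofReal])
    have e2 := Complex.conj_eq_iff_re.1 e1
    refine ⟨e2, a1, (Complex.re_le_norm _).trans a2.le, ?_⟩
    rw [← e2, quadMap_ofReal] at a3
    exact_mod_cast a3
  have hc : ContinuousOn (fun v : ℝ => (ρ v).re) (Icc (-1) 1) := by
    refine Complex.continuous_re.comp_continuousOn (hcont.comp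
      Complex.continuous_ofReal.continuousOn fun v hv => ?_)
    rw [mem_closedBall_zero_iff, Complex.norm_real, Real.norm_eq_abs, abs_le]; exact hv
  cases e with
  | true =>
    refine ⟨_, hc, fun v hv => ?_, fun v hv => ?_⟩ <;> obtain ⟨-, b1, b2, b3⟩ := hreal v hv
    · exact ⟨by linarith, b2⟩
    · exact ⟨b3, by simpa using b1⟩
  | false =>
    refine ⟨_, hc.neg, fun v hv => ?_, fun v hv => ?_⟩ <;> obtain ⟨-, b1, b2, b3⟩ := hreal v hv
    · exact ⟨by simpa using b2, by simp; linarith⟩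
    · exact ⟨by rw [Pi.neg_apply, quadMapR_neg, b3], by simpa using b1.le⟩

/-- The composition of inverse branches along a finite sign word `l`. -/
lemma Adm.exists_itinerary {d : ℕ →ᵇ ℝ} (h : Adm d) (l : List Bool) : ∃ ψ : ℝ → ℝ,
    ContinuousOn ψ (Icc (-1) 1) ∧ MapsTo ψ (Icc (-1) 1) (Icc (-1) 1) ∧
    ∀ v ∈ Icc (-1 : ℝ) 1, (quadMapR d)^[l.length] (ψ v) = v ∧
      ∀ i < l.length, (quadMapR d)^[i] (ψ v) ∈ Icc (-1 : ℝ) 1 ∧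
        (0 < (quadMapR d)^[i] (ψ v) ↔ l[i]? = some true) := by
  induction l with
  | nil => exact ⟨id, continuousOn_id, mapsTo_id _, fun v _ => ⟨rfl, fun i hi => by simp at hi⟩⟩
  | cons e l ih =>
    obtain ⟨ψ, h1, h2, h3⟩ := ih
    obtain ⟨η, k1, k2, k3⟩ := h.exists_branchR e
    refine ⟨η ∘ ψ, k1.comp h1 h2, k2.comp h2, fun v hv => ⟨?_, fun i hi => ?_⟩⟩
    · rw [List.length_cons, iterate_succ_apply, comp_apply, (k3 _ (h2 hv)).1, (h3 v hv).1]
    · cases i with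
      | zero => simpa using ⟨k2 (h2 hv), (k3 _ (h2 hv)).2⟩
      | succ i =>
        rw [iterate_succ_apply, comp_apply, (k3 _ (h2 hv)).1, List.getElem?_cons_succ]
        exact (h3 v hv).2 i (by simpa using hi)

/-- Every finite sign word is the itinerary of a real periodic orbit, since the corresponding inverse
branch maps `[-1, 1]` to itself and so has a fixed point. -/
lemma Adm.exists_cycle {d : ℕ →ᵇ ℝ} (h : Adm d) (l : List Bool) : ∃ x : ℝ,
    (quadMapR d)^[l.length] x = x ∧ ∀ i < l.length, (quadMapR d)^[i] x ∈ Icc (-1 : ℝ) 1 ∧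
        (0 < (quadMapR d)^[i] x ↔ l[i]? = some true) := by
  obtain ⟨ψ, h1, h2, h3⟩ := h.exists_itinerary l
  obtain ⟨x, hx, hfix⟩ := exists_mem_Icc_isFixedPt_of_mapsTo h1 (by norm_num) h2
  have := h3 x hx
  rw [hfix] at this
  exact ⟨x, this⟩

/-! ### Inductive choice of the coefficients -/

/-- The constant sequence `1/50`, centre of the ball of admissible sequences in which the construction
takes place. -/
noncomputable def centre : ℕ →ᵇ ℝ := BoundedContinuousFunction.const ℕ (1 / 50)

lemma adm_of_norm_le {d : ℕ →ᵇ ℝ} (h : ‖d - centre‖ ≤ 1 / 100) : Adm d := by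
  intro k
  have h1 := (d - centre).norm_coe_le_norm k
  have h2 : (d - centre) k = d k - 1 / 50 := rfl
  rw [h2, Real.norm_eq_abs] at h1
  have := abs_le.1 (h1.trans h)
  constructor <;> linarith [this.1, this.2]

/-- `egf d` and its derivative are rational at `q²`, so that `quadMap d` and its derivative are
rational at `q`. -/
def RatAt (d : ℕ →ᵇ ℝ) (q : ℚ) : Prop :=
  (∃ r : ℚ, egfR d ((q : ℝ) ^ 2) = r) ∧ ∃ r : ℚ, egfR (shift d) ((q : ℝ) ^ 2) = r

/-- `d` and `d'` give the same value and the same derivative at `q²`. -/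
def Agree (d d' : ℕ →ᵇ ℝ) (q : ℚ) : Prop :=
  egfR d' ((q : ℝ) ^ 2) = egfR d ((q : ℝ) ^ 2) ∧
    egfR (shift d') ((q : ℝ) ^ 2) = egfR (shift d) ((q : ℝ) ^ 2)

/-- The word `l` is the sign itinerary of a cycle of rational points of `N`. For the empty word the
condition is vacuous. -/
def HasCycle (d : ℕ →ᵇ ℝ) (N : Finset ℚ) (l : List Bool) : Prop :=
  ∃ y : ℕ → ℚ, y l.length = y 0 ∧ ∀ i < l.length, y i ∈ N ∧
    quadMapR d (y i) = y (i + 1) ∧ (0 < y i ↔ l[i]? = some true)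

/-- A stage of the construction: an admissible `d` with rational jets at the points of a finite set
`N`, to be kept unchanged from then on. -/
def Good (d : ℕ →ᵇ ℝ) (N : Finset ℚ) : Prop := ‖d - centre‖ < 1 / 100 ∧ ∀ q ∈ N, RatAt d q

lemma Agree.ratAt {d d' : ℕ →ᵇ ℝ} {q : ℚ} (h : Agree d d' q) (hq : RatAt d q) : RatAt d' q := by
  unfold RatAt; rw [h.1, h.2]; exact hq

lemma norm_sub_centre_lt {d d' : ℕ →ᵇ ℝ} (h : ‖d' - d‖ < 1 / 100 - ‖d - centre‖) :
    ‖d' - centre‖ < 1 / 100 := by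
  have := norm_add_le (d' - d) (d - centre)
  rw [sub_add_sub_cancel] at this
  linarith

/-- Make the jet at one more rational point rational, by a small perturbation. -/
lemma step_rat {d : ℕ →ᵇ ℝ} {N : Finset ℚ} (hd : Good d N) {ε : ℝ} (hε : 0 < ε) (q : ℚ) :
    ∃ (d' : ℕ →ᵇ ℝ) (N' : Finset ℚ), Good d' N' ∧ ‖d' - d‖ < ε ∧ N ⊆ N' ∧
      (∀ u ∈ N, Agree d d' u) ∧ q ∈ N' := by
  classical
  by_cases hq : ∃ q' ∈ N, (q' : ℝ) ^ 2 = (q : ℝ) ^ 2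
  · obtain ⟨q', hq', e⟩ := hq
    refine ⟨d, insert q N, ⟨hd.1, fun u hu => ?_⟩, by simpa using hε, Finset.subset_insert _ _,
      fun u _ => ⟨rfl, rfl⟩, Finset.mem_insert_self _ _⟩
    rcases Finset.mem_insert.1 hu with rfl | hu
    · have := hd.2 q' hq'
      unfold RatAt at this ⊢
      rwa [e] at this
    · exact hd.2 u hu
  · push Not at hq
    obtain ⟨s, hs, -⟩ := exists_rat_seq (egfR d ((q : ℝ) ^ 2))
    have ev := eventually_interpolate d (N.image fun u : ℚ => (u : ℝ) ^ 2) {(q : ℝ) ^ 2}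
      (fun _ y => y) (fun n _ => s n) id (ε := min ε (1 / 100 - ‖d - centre‖))
      (fun y _ => tendsto_const_nhds) (injOn_id _)
      (fun y hy hyN => by
        rw [Finset.mem_singleton] at hy
        obtain ⟨u, hu, e⟩ := Finset.mem_image.1 hyN
        exact hq u hu (by rw [e, hy, id]))
      (fun y hy => by
        rw [Finset.mem_singleton.1 hy]
        have := hs.sub_const (egfR d ((q : ℝ) ^ 2))
        rwa [sub_self] at this)
      (lt_min hε (by linarith [hd.1]))
    obtain ⟨n, d', h1, h2, h3⟩ := ev.exists
    have hag : ∀ u ∈ N, Agree d d' u := fun u hu => h2 _ (Finset.mem_image_of_mem _ hu)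
    refine ⟨d', insert q N, ⟨norm_sub_centre_lt (h1.trans_le (min_le_right _ _)), fun u hu => ?_⟩,
      h1.trans_le (min_le_left _ _), Finset.subset_insert _ _, hag, Finset.mem_insert_self _ _⟩
    rcases Finset.mem_insert.1 hu with rfl | hu
    · have := h3 _ (Finset.mem_singleton_self _)
      exact ⟨⟨_, this.1⟩, this.2⟩
    · exact (hag u hu).ratAt (hd.2 u hu)

/-- Make the cycle with itinerary `l` rational, by a small perturbation. The present cycle `O` is moved
to nearby rational points `r y n`, except that its points which are already rational stay put; the
perturbed map is required to send `r y n` to `r (f y) n`. Points of the cycle whose square is that of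
a point of `N` are rational, have rational images, and need no interpolation. The remaining nodes
have distinct squares because `f` is injective on the cycle and even. -/
lemma step_word {d : ℕ →ᵇ ℝ} {N : Finset ℚ} (hd : Good d N) {ε : ℝ} (hε : 0 < ε) (l : List Bool) :
    ∃ (d' : ℕ →ᵇ ℝ) (N' : Finset ℚ), Good d' N' ∧ ‖d' - d‖ < ε ∧ N ⊆ N' ∧
      (∀ u ∈ N, Agree d d' u) ∧ HasCycle d' N' l := by
  classical
  have hadm := adm_of_norm_le hd.1.le
  obtain ⟨x, hx, hX⟩ := hadm.exists_cycle l
  set f := quadMapR d with hf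
  set p := l.length with hp
  set O : Finset ℝ := (Finset.range p).image fun i => f^[i] x with hO
  have hmemO : ∀ i < p, f^[i] x ∈ O := fun i hi =>
    Finset.mem_image_of_mem _ (Finset.mem_range.2 hi)
  have hfO : ∀ y ∈ O, f y ∈ O := by
    intro y hy
    obtain ⟨i, hi, rfl⟩ := Finset.mem_image.1 hy
    rw [Finset.mem_range] at hi
    rw [← iterate_succ_apply' f]
    rcases (Nat.succ_le_of_lt hi).lt_or_eq with h | h
    · exact hmemO _ h
    · rw [h, hx]; exact hmemO 0 (by omega)
  have hIcc : ∀ y ∈ O, y ∈ Icc (-1 : ℝ) 1 := by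
    intro y hy
    obtain ⟨i, hi, rfl⟩ := Finset.mem_image.1 hy
    exact (hX i (Finset.mem_range.1 hi)).1
  have hper : ∀ y ∈ O, f^[p] y = y := by
    intro y hy
    obtain ⟨i, hi, rfl⟩ := Finset.mem_image.1 hy
    rw [← iterate_add_apply, add_comm, iterate_add_apply, hx]
  -- a periodic orbit is permuted by the map
  have hfinj : ∀ y ∈ O, ∀ y' ∈ O, f y = f y' → y = y' := by
    intro y hy y' hy' e
    have h1 := hper y hy
    have h2 := hper y' hy'
    obtain ⟨i, hi, -⟩ := Finset.mem_image.1 hy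
    rw [Finset.mem_range] at hi
    obtain ⟨k, hk⟩ : ∃ k, p = k + 1 := ⟨p - 1, by omega⟩
    rw [hk, iterate_succ_apply] at h1 h2
    rw [← h1, e, h2]
  have hsq : ∀ y y' : ℝ, y ^ 2 = y' ^ 2 → f y = f y' := by
    intro y y' e
    rw [hf]; unfold quadMapR; rw [e]
  have hnz : ∀ y ∈ O, y ≠ 0 := by
    intro y hy h0
    have h1 := hIcc y hy
    have h2 := hIcc _ (hfO y hy)
    have := hadm.re_bound (z := (y : ℂ)) (by
        rw [Complex.norm_real, Real.norm_eq_abs, abs_le]; exact h1)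
      (by rw [quadMap_ofReal, Complex.norm_real, Real.norm_eq_abs, abs_le]; exact h2)
    rw [h0] at this
    norm_num at this
  -- `r y n` tends to `y`, and is equal to `y` if `y` is rational
  choose r hr1 hr2 using exists_rat_seq
  have hsign : ∀ y ∈ O, ∀ᶠ n in atTop, (0 < r y n ↔ 0 < y) := by
    intro y hy
    rcases lt_or_gt_of_ne (hnz y hy) with h | h
    · filter_upwards [(hr1 y).eventually_lt_const h] with n hn
      have : r y n < 0 := by exact_mod_cast hn
      constructor <;> intro <;> linarith
    · filter_upwards [(hr1 y).eventually_const_lt h] with n hn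
      have : 0 < r y n := by exact_mod_cast hn
      simp [this, h]
  -- the points of the cycle at which the map is still free to move
  obtain ⟨M, hM⟩ : ∃ M : Finset ℝ, ∀ y, y ∈ M ↔ y ∈ O ∧ ∀ q ∈ N, (q : ℝ) ^ 2 ≠ y ^ 2 :=
    ⟨O.filter fun y => ∀ q ∈ N, (q : ℝ) ^ 2 ≠ y ^ 2, fun y => Finset.mem_filter⟩
  have hMO : ∀ y ∈ M, y ∈ O := fun y hy => ((hM y).1 hy).1
  have ev := eventually_interpolate d (N.image fun u : ℚ => (u : ℝ) ^ 2) M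
    (fun n y => (r y n : ℝ) ^ 2) (fun n y => r (f y) n - 4 * (r y n : ℝ) ^ 2 + 2) (fun y => y ^ 2)
    (ε := min ε (1 / 100 - ‖d - centre‖))
    (fun y _ => (hr1 y).pow 2)
    (fun y hy y' hy' e => hfinj y (hMO y hy) y' (hMO y' hy') (hsq _ _ e))
    (fun y hy hyN => by
      obtain ⟨u, hu, e⟩ := Finset.mem_image.1 hyN
      exact ((hM y).1 hy).2 u hu e)
    (fun y hy => by
      have h1 := (((hr1 (f y)).sub (((hr1 y).pow 2).const_mul 4)).add_const 2).sub
        (((continuous_egfR d).tendsto _).comp ((hr1 y).pow 2))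
      convert! h1 using 2
      rw [hf]; unfold quadMapR; ring)
    (lt_min hε (by linarith [hd.1]))
  obtain ⟨n, ⟨d', h1, h2, h3⟩, hsg⟩ := (ev.and ((Finset.eventually_all O).2 hsign)).exists
  have hag : ∀ u ∈ N, Agree d d' u := fun u hu => h2 _ (Finset.mem_image_of_mem _ hu)
  -- the new map permutes the rational approximations as the old one permutes the cycle
  have key : ∀ y ∈ O, quadMapR d' (r y n) = r (f y) n ∧ RatAt d' (r y n) := by
    intro y hy
    by_cases hyM : y ∈ M
    · obtain ⟨e1, e2⟩ := h3 y hyM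
      refine ⟨?_, ⟨r (f y) n - 4 * (r y n) ^ 2 + 2, ?_⟩, e2⟩
      · unfold quadMapR; rw [e1]; ring
      · rw [e1]; push_cast; rfl
    · have : ∃ q ∈ N, (q : ℝ) ^ 2 = y ^ 2 := by
        by_contra! hcon
        exact hyM ((hM y).2 ⟨hy, hcon⟩)
      obtain ⟨q, hq, e⟩ := this
      have hry : (r y n : ℝ) = y := by
        rcases sq_eq_sq_iff_eq_or_eq_neg.1 e with h | h
        · rw [hr2 y q h.symm, h]
        · rw [hr2 y (-q) (by rw [Rat.cast_neg, h, neg_neg])]; rw [Rat.cast_neg, h, neg_neg]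
      obtain ⟨a1, a2⟩ := hag q hq
      obtain ⟨⟨a, ha⟩, -⟩ := hd.2 q hq
      have hfy : f y = ((4 * q ^ 2 - 2 + a : ℚ) : ℝ) := by
        rw [hf]; unfold quadMapR; rw [← e, ha]; push_cast; rfl
      constructor
      · rw [hr2 (f y) _ hfy n, ← hfy, hry]
        rw [hf]; unfold quadMapR; rw [← e, a1]
      · have := (hag q hq).ratAt (hd.2 q hq)
        unfold RatAt at this ⊢
        rwa [hry, ← e]
  refine ⟨d', N ∪ O.image fun y => r y n,
    ⟨norm_sub_centre_lt (h1.trans_le (min_le_right _ _)), fun u hu => ?_⟩,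
    h1.trans_le (min_le_left _ _), Finset.subset_union_left, hag, fun i => r (f^[i] x) n, ?_, ?_⟩
  · rcases Finset.mem_union.1 hu with hu | hu
    · exact (hag u hu).ratAt (hd.2 u hu)
    · obtain ⟨y, hy, rfl⟩ := Finset.mem_image.1 hu
      exact (key y hy).2
  · show r (f^[p] x) n = r (f^[0] x) n
    rw [hx]; rfl
  · intro i hi
    refine ⟨Finset.mem_union_right _ (Finset.mem_image_of_mem _ (hmemO i hi)), ?_, ?_⟩
    · rw [(key _ (hmemO i hi)).1, ← iterate_succ_apply' f]
    · rw [hsg _ (hmemO i hi)]; exact (hX i hi).2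

/-- One step of the construction, handling a rational number and a word. -/
lemma step (t : ℚ × List Bool) {ε : ℝ} (hε : 0 < ε) {d : ℕ →ᵇ ℝ} {N : Finset ℚ} (hd : Good d N) :
    ∃ (d' : ℕ →ᵇ ℝ) (N' : Finset ℚ), Good d' N' ∧ ‖d' - d‖ ≤ ε ∧ N ⊆ N' ∧
      (∀ u ∈ N, Agree d d' u) ∧ t.1 ∈ N' ∧ HasCycle d' N' t.2 := by
  obtain ⟨d₁, N₁, g1, n1, s1, a1, q1⟩ := step_rat hd (half_pos hε) t.1
  obtain ⟨d₂, N₂, g2, n2, s2, a2, q2⟩ := step_word g1 (half_pos hε) t.2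
  refine ⟨d₂, N₂, g2, ?_, s1.trans s2, fun u hu => ⟨?_, ?_⟩, s2 q1, q2⟩
  · have := norm_add_le (d₂ - d₁) (d₁ - d)
    rw [sub_add_sub_cancel] at this
    linarith
  · rw [(a2 u (s1 hu)).1, (a1 u hu).1]
  · rw [(a2 u (s1 hu)).2, (a1 u hu).2]

/-- There are admissible coefficients with rational jets at all rationals, for which every finite sign
word is the itinerary of a rational cycle. All pairs of a rational and a word are treated one after
the other by perturbations of size `2⁻ⁿ`; each requirement involves finitely many jets, which are
frozen once it is met, so it passes to the limit. -/
theorem exists_coeffs : ∃ d : ℕ →ᵇ ℝ, Adm d ∧ (∀ q : ℚ, RatAt d q) ∧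
    ∀ l : List Bool, ∃ y : ℕ → ℚ, y l.length = y 0 ∧ ∀ i < l.length,
      quadMapR d (y i) = y (i + 1) ∧ (0 < y i ↔ l[i]? = some true) := by
  obtain ⟨t, ht⟩ := exists_surjective_nat (ℚ × List Bool)
  let S := {s : (ℕ →ᵇ ℝ) × Finset ℚ // Good s.1 s.2}
  have hstep : ∀ (n : ℕ) (s : S), ∃ s' : S, ‖s'.1.1 - s.1.1‖ ≤ (1 / 2 : ℝ) ^ n ∧
      s.1.2 ⊆ s'.1.2 ∧ (∀ u ∈ s.1.2, Agree s.1.1 s'.1.1 u) ∧ (t n).1 ∈ s'.1.2 ∧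
      HasCycle s'.1.1 s'.1.2 (t n).2 := by
    rintro n ⟨⟨d, N⟩, hs⟩
    obtain ⟨d', N', g, h⟩ := step (t n) (ε := (1 / 2 : ℝ) ^ n) (by positivity) hs
    exact ⟨⟨⟨d', N'⟩, g⟩, h⟩
  choose nxt hnxt using hstep
  let s₀ : S := ⟨(centre, ∅), by simp [Good]⟩
  obtain ⟨s, hs⟩ : ∃ s : ℕ → S, ∀ n, s (n + 1) = nxt n (s n) :=
    ⟨fun n => Nat.rec s₀ nxt n, fun n => rfl⟩
  obtain ⟨D, hD⟩ : ∃ D : ℕ → ℕ →ᵇ ℝ, ∀ n, D n = (s n).1.1 := ⟨_, fun n => rfl⟩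
  obtain ⟨N, hN⟩ : ∃ N : ℕ → Finset ℚ, ∀ n, N n = (s n).1.2 := ⟨_, fun n => rfl⟩
  have hS : ∀ n, ‖D (n + 1) - D n‖ ≤ (1 / 2 : ℝ) ^ n ∧ N n ⊆ N (n + 1) ∧
      (∀ u ∈ N n, Agree (D n) (D (n + 1)) u) ∧ (t n).1 ∈ N (n + 1) ∧
      HasCycle (D (n + 1)) (N (n + 1)) (t n).2 := by
    intro n
    have := hnxt n (s n)
    rwa [← hs, ← hD, ← hD, ← hN, ← hN] at this
  have hgood : ∀ n, Good (D n) (N n) := fun n => by rw [hD, hN]; exact (s n).2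
  have hcau : CauchySeq D := cauchySeq_of_le_geometric (1 / 2) 1 (by norm_num) fun n => by
    rw [dist_comm, dist_eq_norm, one_mul]; exact (hS n).1
  obtain ⟨d, hd⟩ := cauchySeq_tendsto_of_complete hcau
  have hagn : ∀ n k, N n ⊆ N (n + k) ∧ ∀ u ∈ N n, Agree (D n) (D (n + k)) u := by
    intro n k
    induction k with
    | zero => exact ⟨Finset.Subset.refl _, fun u _ => ⟨rfl, rfl⟩⟩
    | succ k ih =>
      obtain ⟨-, b1, b2, -⟩ := hS (n + k)
      refine ⟨ih.1.trans b1, fun u hu => ⟨?_, ?_⟩⟩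
      · exact (b2 u (ih.1 hu)).1.trans (ih.2 u hu).1
      · exact (b2 u (ih.1 hu)).2.trans (ih.2 u hu).2
  -- jets are frozen from stage `n` on, and depend continuously on the coefficients
  have hlim : ∀ n, ∀ u ∈ N n, Agree (D n) d u := by
    intro n u hu
    constructor
    · refine tendsto_nhds_unique (tendsto_egfR hd _) (tendsto_const_nhds.congr' ?_)
      filter_upwards [eventually_ge_atTop n] with m hm
      obtain ⟨k, rfl⟩ := Nat.exists_eq_add_of_le hm
      exact ((hagn n k).2 u hu).1.symm
    · refine tendsto_nhds_unique (tendsto_egfR (tendsto_shift hd) _) (tendsto_const_nhds.congr' ?_)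
      filter_upwards [eventually_ge_atTop n] with m hm
      obtain ⟨k, rfl⟩ := Nat.exists_eq_add_of_le hm
      exact ((hagn n k).2 u hu).2.symm
  refine ⟨d, adm_of_norm_le ?_, fun q => ?_, fun l => ?_⟩
  · exact le_of_tendsto (hd.sub_const centre).norm (Eventually.of_forall fun n => (hgood n).1.le)
  · obtain ⟨n, hn⟩ := ht (q, [])
    have h1 := (hS n).2.2.2.1
    rw [hn] at h1
    exact (hlim _ q h1).ratAt ((hgood (n + 1)).2 q h1)
  · obtain ⟨n, hn⟩ := ht (0, l)
    obtain ⟨y, h0, hy⟩ := (hS n).2.2.2.2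
    rw [hn] at h0 hy
    refine ⟨y, h0, fun i hi => ?_⟩
    obtain ⟨h1, h2, h3⟩ := hy i hi
    refine ⟨?_, h3⟩
    rw [← h2]; unfold quadMapR
    rw [(hlim _ _ h1).1]

/-! ### Dynamics on the real line -/

lemma quadMap_ratCast {d : ℕ →ᵇ ℝ} (hd : ∀ q, RatAt d q) (q : ℚ) :
    ∃ r : ℚ, quadMap d (q : ℂ) = (r : ℂ) := by
  obtain ⟨a, ha⟩ := (hd q).1
  refine ⟨4 * q ^ 2 - 2 + a, ?_⟩
  rw [← Complex.ofReal_ratCast q, quadMap_ofReal]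
  unfold quadMapR
  rw [ha]; push_cast; rfl

/-- All Taylor coefficients of `x ↦ quadMap d x + 2` are nonnegative and only even powers occur. -/
lemma convexOn_quadMap {d : ℕ →ᵇ ℝ} (h : Adm d) :
    ConvexOn ℝ Set.univ (fun x : ℝ => (quadMap d x).re) := by
  have h1 : ConvexOn ℝ Set.univ (fun x : ℝ => egfR d (x ^ 2)) := by
    refine ⟨convex_univ, fun x _ y _ a b ha hb hab => ?_⟩
    refine hasSum_le (fun k => ?_) (hasSum_egfR d ((a • x + b • y) ^ 2))
      (((hasSum_egfR d (x ^ 2)).mul_left a).add ((hasSum_egfR d (y ^ 2)).mul_left b))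
    have hk := (Even.convexOn_pow (𝕜 := ℝ) (even_two_mul k)).2 (mem_univ x) (mem_univ y) ha hb hab
    rw [smul_eq_mul, smul_eq_mul] at hk
    have hc : 0 ≤ d k / (k ! : ℝ) := div_nonneg (by linarith [(h k).1]) (Nat.cast_nonneg _)
    have := mul_le_mul_of_nonneg_left hk hc
    simp only [smul_eq_mul]
    simp only [pow_mul] at this
    calc _ = d k / (k ! : ℝ) * ((a * x + b * y) ^ 2) ^ k := by ring
      _ ≤ _ := this
      _ = _ := by ring
  have h2 : ConvexOn ℝ Set.univ (fun x : ℝ => x ^ 2) := even_two.convexOn_pow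
  have h3 := ((h2.smul (by norm_num : (0 : ℝ) ≤ 4)).add_const (-2)).add h1
  convert! h3 using 2 with x
  rw [quadMap_ofReal, Complex.ofReal_re]
  simp [quadMapR, sub_eq_add_neg]

lemma Adm.exp_le {d : ℕ →ᵇ ℝ} (h : Adm d) {x : ℝ} (hx : 0 ≤ x) :
    1 / 100 * Real.exp x ≤ egfR d x := by
  have h1 : HasSum (fun k => x ^ k / (k ! : ℝ)) (Real.exp x) := by
    rw [Real.exp_eq_exp_ℝ]; exact NormedSpace.expSeries_div_hasSum_exp x
  exact hasSum_le (fun k => mul_le_mul_of_nonneg_right (h k).1 (by positivity))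
    (h1.mul_left (1 / 100)) (hasSum_egfR d x)

/-- Outside `(-1, 1)` real points are repelled to infinity. -/
lemma Adm.two_mul_abs_le {d : ℕ →ᵇ ℝ} (h : Adm d) {x : ℝ} (hx : 1 ≤ |x|) :
    2 * |x| ≤ |quadMapR d x| := by
  have h1 := h.exp_le (sq_nonneg x)
  have h2 := Real.exp_pos (x ^ 2)
  refine le_trans ?_ (le_abs_self _)
  unfold quadMapR
  nlinarith [sq_abs x]

/-- On the positive axis the map grows at least like `exp (x²) / 100`. -/
lemma Adm.not_polynomial {d : ℕ →ᵇ ℝ} (h : Adm d) :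
    ¬ ∃ P : Polynomial ℂ, quadMap d = fun z => P.eval z := by
  rintro ⟨P, hP⟩
  set Q : Polynomial ℝ := ∑ i ∈ Finset.range (P.natDegree + 1),
    Polynomial.C ‖P.coeff i‖ * Polynomial.X ^ i with hQ
  have hPQ : ∀ x : ℝ, 0 ≤ x → ‖P.eval (x : ℂ)‖ ≤ Q.eval x := by
    intro x hx
    rw [Polynomial.eval_eq_sum_range, hQ, Polynomial.eval_finsetSum]
    refine (norm_sum_le _ _).trans (Finset.sum_le_sum fun i _ => ?_)
    simp [abs_of_nonneg hx]
  have ev := (Polynomial.tendsto_div_exp_atTop Q).eventually_lt_const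
    (by norm_num : (0 : ℝ) < 1 / 100)
  obtain ⟨x, h1, hx⟩ := (ev.and (eventually_ge_atTop 1)).exists
  rw [div_lt_iff₀ (Real.exp_pos x)] at h1
  have h2 := hPQ x (by linarith)
  have h3 : quadMap d x = P.eval (x : ℂ) := congrFun hP x
  rw [← h3, quadMap_ofReal, Complex.norm_real, Real.norm_eq_abs] at h2
  have h4 := (le_abs_self _).trans h2
  have h5 := h.exp_le (sq_nonneg x)
  have h6 : Real.exp x ≤ Real.exp (x ^ 2) := Real.exp_le_exp.2 (by nlinarith)
  unfold quadMapR at h4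
  nlinarith

lemma Adm.abs_lt_one {d : ℕ →ᵇ ℝ} (h : Adm d) {x : ℝ} {p : ℕ} (hp : 1 ≤ p)
    (hx : (quadMapR d)^[p] x = x) : |x| < 1 := by
  by_contra! hx1
  have key : ∀ j : ℕ, 2 ^ j * |x| ≤ |(quadMapR d)^[j] x| := by
    intro j
    induction j with
    | zero => simp
    | succ j ih =>
      have h2 : (1 : ℝ) ≤ 2 ^ j := one_le_pow₀ (by norm_num)
      rw [iterate_succ_apply', pow_succ]
      have := h.two_mul_abs_le (x := (quadMapR d)^[j] x) (by nlinarith)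
      linarith
  have h1 := key p
  rw [hx] at h1
  have h3 : (2 : ℝ) ≤ 2 ^ p := le_self_pow₀ (by norm_num) (by omega)
  nlinarith

/-- Real periodic orbits stay in the domain of the quadratic-like restriction. -/
lemma Adm.orbit_mem {d : ℕ →ᵇ ℝ} (h : Adm d) {x : ℝ} {p : ℕ} (hp : 1 ≤ p)
    (hx : (quadMap d)^[p] (x : ℂ) = x) (k : ℕ) :
    (quadMap d)^[k] (x : ℂ) ∈ quadDomain (quadMap d) := by
  have hx' : (quadMapR d)^[p] x = x := by
    rw [quadMap_iterate_ofReal] at hx; exact_mod_cast hx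
  have key : ∀ k, (quadMap d)^[k] (x : ℂ) ∈ ball (0 : ℂ) 1 := by
    intro k
    rw [quadMap_iterate_ofReal, mem_ball_zero_iff, Complex.norm_real, Real.norm_eq_abs]
    refine h.abs_lt_one hp ?_
    rw [← iterate_add_apply, add_comm, iterate_add_apply, hx']
  refine ⟨?_, key k⟩
  rw [mem_preimage, ← iterate_succ_apply' (quadMap d)]
  exact key (k + 1)

/-- A periodic point of the quadratic-like restriction is rational: it has the same itinerary as some
rational cycle, and itineraries determine periodic points. -/
lemma Adm.periodic_rat {d : ℕ →ᵇ ℝ} (h : Adm d)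
    (hcyc : ∀ l : List Bool, ∃ y : ℕ → ℚ, y l.length = y 0 ∧ ∀ i < l.length,
      quadMapR d (y i) = y (i + 1) ∧ (0 < y i ↔ l[i]? = some true))
    {z : ℂ} {p : ℕ} (hp : 1 ≤ p) (hz : ∀ k < p, (quadMap d)^[k] z ∈ quadDomain (quadMap d))
    (hfix : (quadMap d)^[p] z = z) : ∃ q : ℚ, z = (q : ℂ) := by
  obtain ⟨y, hy0, hy⟩ := hcyc (List.ofFn fun i : Fin p => decide (0 < ((quadMap d)^[i] z).re))
  rw [List.length_ofFn] at hy0 hy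
  have hit : ∀ k ≤ p, (quadMap d)^[k] ((y 0 : ℝ) : ℂ) = ((y k : ℝ) : ℂ) := by
    intro k hk
    induction k with
    | zero => rfl
    | succ k ih =>
      rw [iterate_succ_apply', ih (by omega), quadMap_ofReal, (hy k (by omega)).1]
  have hfix' : (quadMap d)^[p] ((y 0 : ℝ) : ℂ) = ((y 0 : ℝ) : ℂ) := by rw [hit p le_rfl, hy0]
  refine ⟨y 0, ?_⟩
  rw [← Complex.ofReal_ratCast]
  refine h.periodic_unique hp hz (fun k _ => h.orbit_mem hp hfix' k) (fun k hk => ?_) hfix hfix'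
  rw [hit k hk.le, Complex.ofReal_re, Rat.cast_pos, (hy k hk).2, List.getElem?_ofFn]
  simp [hk]

lemma hasDerivAt_iterate_rat {d : ℕ →ᵇ ℝ} (hd : ∀ q, RatAt d q) (q : ℚ) (n : ℕ) :
    (∃ r : ℚ, (quadMap d)^[n] (q : ℂ) = r) ∧
      ∃ m : ℚ, HasDerivAt (quadMap d)^[n] (m : ℂ) (q : ℂ) := by
  induction n with
  | zero => exact ⟨⟨q, rfl⟩, 1, by simpa using hasDerivAt_id (q : ℂ)⟩
  | succ n ih =>
    obtain ⟨⟨r, hr⟩, m, hm⟩ := ih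
    obtain ⟨r', hr'⟩ := quadMap_ratCast hd r
    refine ⟨⟨r', by rw [iterate_succ_apply', hr, hr']⟩, ?_⟩
    obtain ⟨a, ha⟩ := (hd r).2
    have h1 := hasDerivAt_quadMap d (r : ℂ)
    have h2 : egf (shift d) ((r : ℂ) ^ 2) = (a : ℂ) := by
      rw [← Complex.ofReal_ratCast r, ← Complex.ofReal_pow, egf_ofReal, ha, Complex.ofReal_ratCast]
    rw [h2, ← hr] at h1
    refine ⟨2 * r * (4 + a) * m, ?_⟩
    rw [iterate_succ']
    convert! h1.comp (q : ℂ) hm using 1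
    rw [hr]; push_cast; ring

/-! ### The covering -/

lemma mem_quadDomain {f : ℂ → ℂ} {z : ℂ} : z ∈ quadDomain f ↔ ‖f z‖ < 1 ∧ ‖z‖ < 1 := by
  simp [quadDomain]

lemma Adm.re_bound' {d : ℕ →ᵇ ℝ} (h : Adm d) {z : ℂ} (hz : z ∈ quadDomain (quadMap d)) :
    2 / 5 ≤ |z.re| := by
  obtain ⟨h1, h2⟩ := mem_quadDomain.1 hz
  exact h.re_bound h2.le h1.le

lemma Adm.mapsTo_ball (d : ℕ →ᵇ ℝ) :
    MapsTo (quadMap d) (quadDomain (quadMap d)) (ball (0 : ℂ) 1) := fun _ hz => hz.1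

/-- `z ↦ (quadMap d z, sign of re z)` identifies the domain with two copies of the disk, the covering
map becoming the projection. The sign is locally constant because the domain avoids
`|re z| < 2/5`. -/
lemma Adm.exists_homeomorph {d : ℕ →ᵇ ℝ} (h : Adm d) :
    ∃ G : quadDomain (quadMap d) ≃ₜ ball (0 : ℂ) 1 × Bool,
      ∀ z, (G z).1 = (Adm.mapsTo_ball d).restrict _ _ _ z := by
  obtain ⟨ρ, hρ, hcont, huniq⟩ := h.exists_branch
  have hb : ∀ v : ball (0 : ℂ) 1, ‖(v : ℂ)‖ ≤ 1 := fun v => (mem_ball_zero_iff.1 v.2).le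
  let σ : Bool → ℂ := fun e => bif e then 1 else -1
  have hσ : ∀ e, ‖σ e‖ = 1 := by rintro (_ | _) <;> simp [σ]
  have hqσ : ∀ e z, quadMap d (σ e * z) = quadMap d z := by
    rintro (_ | _) z <;> simp [σ, quadMap_neg]
  have hmem : ∀ w : ball (0 : ℂ) 1 × Bool, σ w.2 * ρ w.1 ∈ quadDomain (quadMap d) := by
    rintro ⟨v, e⟩
    obtain ⟨a1, a2, a3⟩ := hρ v (hb v)
    rw [mem_quadDomain, hqσ, norm_mul, hσ, one_mul]
    refine ⟨?_, a2⟩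
    rw [a3]; exact mem_ball_zero_iff.1 v.2
  refine ⟨{ toFun := fun z => ((Adm.mapsTo_ball d).restrict _ _ _ z, decide (0 < (z : ℂ).re))
            invFun := fun w => ⟨σ w.2 * ρ w.1, hmem w⟩
            left_inv := ?_
            right_inv := ?_
            continuous_toFun := ?_
            continuous_invFun := ?_ }, fun z => rfl⟩
  · rintro ⟨z, hz⟩
    have hre := h.re_bound' hz
    obtain ⟨h1, h2⟩ := mem_quadDomain.1 hz
    ext1
    show σ (decide (0 < z.re)) * ρ (quadMap d z) = z
    rcases lt_or_ge 0 z.re with hp | hp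
    · rw [← huniq _ h1.le z h2.le hp rfl]; simp [σ, hp]
    · rw [abs_of_nonpos hp] at hre
      rw [← huniq _ h1.le (-z) (by rw [norm_neg]; exact h2.le)
        (by rw [Complex.neg_re]; linarith) (quadMap_neg d z)]
      simp [σ, not_lt.2 hp]
  · rintro ⟨v, e⟩
    obtain ⟨a1, a2, a3⟩ := hρ v (hb v)
    refine Prod.ext (Subtype.ext ?_) ?_
    · show quadMap d (σ e * ρ v) = v
      rw [hqσ, a3]
    · show decide (0 < (σ e * ρ v).re) = e
      cases e
      · simpa [σ] using a1.le
      · simpa [σ] using a1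
  · refine Continuous.prodMk ?_ ?_
    · exact ((differentiable_quadMap d).continuous.continuousOn.mapsToRestrict _)
    · rw [continuous_bool_rng true]
      have hre : Continuous fun z : quadDomain (quadMap d) => (z : ℂ).re :=
        Complex.continuous_re.comp continuous_subtype_val
      constructor
      · have : (fun z : quadDomain (quadMap d) => decide (0 < (z : ℂ).re)) ⁻¹' {true} =
            {z : quadDomain (quadMap d) | 0 ≤ (z : ℂ).re} := by
          ext z
          have := h.re_bound' z.2
          simp only [mem_preimage, mem_singleton_iff, decide_eq_true_eq, mem_ofPred_eq]
          refine ⟨le_of_lt, fun hz => ?_⟩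
          rw [abs_of_nonneg hz] at this; linarith
        rw [this]
        exact isClosed_le continuous_const hre
      · have : (fun z : quadDomain (quadMap d) => decide (0 < (z : ℂ).re)) ⁻¹' {true} =
            {z : quadDomain (quadMap d) | 0 < (z : ℂ).re} := by ext z; simp
        rw [this]
        exact isOpen_lt continuous_const hre
  · refine Continuous.subtype_mk ?_ _
    refine ((continuous_of_discreteTopology (f := σ)).comp continuous_snd).mul ?_
    exact (continuousOn_iff_continuous_domRestrict.1 (hcont.mono ball_subset_closedBall)).comp
      continuous_fst

lemma Adm.isEscapingQuadLike {d : ℕ →ᵇ ℝ} (h : Adm d) :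
    IsEscapingQuadLike (quadMap d) (quadDomain (quadMap d)) (ball (0 : ℂ) 1) := by
  obtain ⟨G, hG⟩ := h.exists_homeomorph
  have hev : ∀ v, IsEvenlyCovered ((Adm.mapsTo_ball d).restrict _ _ _) v Bool := fun v =>
    ⟨inferInstance, univ, mem_univ _, isOpen_univ, isOpen_univ,
      (Homeomorph.Set.univ _).trans
        (G.trans ((Homeomorph.Set.univ _).symm.prodCongr (Homeomorph.refl Bool))),
      fun z => hG z⟩
  have hclos : closure (quadDomain (quadMap d)) ⊆ {z | ‖z‖ ^ 2 ≤ 31 / 40} := by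
    refine closure_minimal (fun z hz => ?_) (isClosed_le (by fun_prop) continuous_const)
    obtain ⟨h1, h2⟩ := mem_quadDomain.1 hz
    exact (h.bounds h2.le h1.le).2
  have hball : closure (quadDomain (quadMap d)) ⊆ ball 0 1 := fun z hz => by
    have : ‖z‖ ^ 2 ≤ 31 / 40 := hclos hz
    rw [mem_ball_zero_iff]
    nlinarith [norm_nonneg z]
  refine ⟨?_, isOpen_ball, ?_, ⟨0, by simp⟩, ?_, hball, ?_,
    (differentiable_quadMap d).differentiableOn, Adm.mapsTo_ball d,
    fun v => (hev v).to_isEvenlyCovered_preimage, fun v => ?_⟩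
  · exact (isOpen_ball.preimage (differentiable_quadMap d).continuous).inter isOpen_ball
  · obtain ⟨z, -, h2, h3⟩ := h.exists_root (v := 0) (by simp)
    exact ⟨z, mem_quadDomain.2 ⟨by simp [h3], h2⟩⟩
  · exact (isCompact_closedBall (0 : ℂ) 1).of_isClosed_subset isClosed_closure
      (hball.trans ball_subset_closedBall)
  · have := (convex_ball (0 : ℂ) 1).contractibleSpace ⟨0, by simp⟩
    infer_instance
  · rw [← Nat.card_congr (hev v).fiberHomeomorph.toEquiv]
    simp

/-! ### Absence of affine conjugacies -/

/-- An injective holomorphic map has nonvanishing derivative: at a zero of order `m ≥ 2` of `Φ - Φ z₀`,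
this difference is locally a nonzero constant times `h ^ m` with `h` open, so that two points where
`h` differs by an `m`-th root of unity have the same image. -/
lemma deriv_ne_zero_of_injOn {Φ : ℂ → ℂ} {U : Set ℂ} (hU : IsOpen U)
    (hΦ : DifferentiableOn ℂ Φ U) (hinj : InjOn Φ U) {z₀ : ℂ} (hz₀ : z₀ ∈ U) :
    deriv Φ z₀ ≠ 0 := by
  have hUz : U ∈ 𝓝 z₀ := hU.mem_nhds hz₀
  have han : AnalyticAt ℂ Φ z₀ := hΦ.analyticAt hUz
  have han' : AnalyticAt ℂ (fun z => Φ z - Φ z₀) z₀ := han.sub analyticAt_const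
  have hne : analyticOrderAt (fun z => Φ z - Φ z₀) z₀ ≠ ⊤ := by
    intro htop
    rw [analyticOrderAt_eq_top] at htop
    have h1 : ∀ᶠ z in 𝓝[≠] z₀, Φ z - Φ z₀ = 0 ∧ z ∈ U :=
      (htop.and hUz).filter_mono nhdsWithin_le_nhds
    obtain ⟨z, ⟨hz, hzU⟩, hzne⟩ := (h1.and self_mem_nhdsWithin).exists
    exact hzne (hinj hzU hz₀ (sub_eq_zero.1 hz))
  obtain ⟨g, hg, hg0, hev⟩ := (han'.analyticOrderAt_ne_top).1 hne
  set m := analyticOrderNatAt (fun z => Φ z - Φ z₀) z₀ with hm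
  rcases Nat.lt_or_ge m 2 with hm2 | hm2
  · have hm0 : m ≠ 0 := by
      intro h0
      have := hev.self_of_nhds
      rw [h0] at this
      simp at this
      exact hg0 this.symm
    have hm1 : m = 1 := by omega
    have h1 : HasDerivAt (fun z => (z - z₀) * g z) (1 * g z₀ + (z₀ - z₀) * deriv g z₀) z₀ :=
      ((hasDerivAt_id z₀).sub_const z₀).mul hg.differentiableAt.hasDerivAt
    have h2 : HasDerivAt (fun z => Φ z - Φ z₀) (1 * g z₀ + (z₀ - z₀) * deriv g z₀) z₀ :=
      h1.congr_of_eventuallyEq (by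
        filter_upwards [hev] with z hz
        rw [hz, hm1, pow_one, smul_eq_mul])
    have h3 := h2.add_const (Φ z₀)
    simp only [sub_add_cancel, one_mul, sub_self, zero_mul, add_zero] at h3
    rw [h3.deriv]
    exact hg0
  · exfalso
    have hm0 : m ≠ 0 := by omega
    -- `h z = (z - z₀) * k z` is a local `m`-th root of `(Φ z - Φ z₀) / g z₀`
    set k : ℂ → ℂ := fun z => (g z / g z₀) ^ ((m : ℂ)⁻¹) with hk
    have hkan : AnalyticAt ℂ k z₀ := by
      refine (hg.div analyticAt_const hg0).cpow analyticAt_const ?_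
      rw [Pi.div_apply, div_self hg0]
      exact Complex.one_mem_slitPlane
    have hk0 : k z₀ = 1 := by simp [hk, div_self hg0]
    have hhan : AnalyticAt ℂ (fun z => (z - z₀) * k z) z₀ :=
      (analyticAt_id.sub analyticAt_const).mul hkan
    have hder : HasDerivAt (fun z => (z - z₀) * k z) (1 * k z₀ + (z₀ - z₀) * deriv k z₀) z₀ :=
      ((hasDerivAt_id z₀).sub_const z₀).mul hkan.differentiableAt.hasDerivAt
    have hs := hhan.hasStrictDerivAt
    rw [hder.deriv, hk0, sub_self, zero_mul, add_zero, mul_one] at hs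
    have hmap := hs.map_nhds_eq one_ne_zero
    rw [sub_self, zero_mul] at hmap
    set h : ℂ → ℂ := fun z => (z - z₀) * k z with hh
    set W : Set ℂ := {z | z ∈ U ∧ h z ^ m = (Φ z - Φ z₀) / g z₀} with hW
    have hWn : W ∈ 𝓝 z₀ := by
      filter_upwards [hUz, hev] with z h1 h2
      refine ⟨h1, ?_⟩
      rw [hh, h2, smul_eq_mul]
      show ((z - z₀) * (g z / g z₀) ^ ((m : ℂ)⁻¹)) ^ m = _
      rw [mul_pow, Complex.cpow_nat_inv_pow _ hm0, mul_div_assoc]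
    have himg : h '' W ∈ 𝓝 (0 : ℂ) := by
      rw [← hmap]; exact image_mem_map hWn
    -- rotate a small value of `h` by a primitive `m`-th root of unity
    have hprim := Complex.isPrimitiveRoot_exp m hm0
    set ζ := Complex.exp (2 * Real.pi * Complex.I / m) with hζ
    have hmulζ : Tendsto (fun t : ℂ => ζ * t) (𝓝 0) (𝓝 0) := by
      have : Continuous fun t : ℂ => ζ * t := by fun_prop
      simpa using this.tendsto 0
    have h1 : ∀ᶠ t in 𝓝[≠] (0 : ℂ), t ∈ h '' W ∧ ζ * t ∈ h '' W :=
      (Filter.Eventually.and himg (hmulζ himg)).filter_mono nhdsWithin_le_nhds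
    obtain ⟨t, ⟨⟨z₁, hz1, e1⟩, z₂, hz2, e2⟩, htne⟩ := (h1.and self_mem_nhdsWithin).exists
    have h3 : h z₂ ^ m = h z₁ ^ m := by rw [e2, e1, mul_pow, hprim.pow_eq_one, one_mul]
    rw [hz1.2, hz2.2, div_left_inj' hg0, sub_left_inj] at h3
    have h4 := hinj hz2.1 hz1.1 h3
    rw [h4, e1] at e2
    have h5 : ζ = 1 := by
      have : (ζ - 1) * t = 0 := by rw [sub_mul, ← e2, one_mul, sub_self]
      rcases mul_eq_zero.1 this with h | h
      · exact sub_eq_zero.1 h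
      · exact (htne h).elim
    exact hprim.ne_one (by omega) h5

/-- Two points of the domain whose real parts have the same sign lie in one component, the image of
the disk under an inverse branch. -/
lemma Adm.mem_component {d : ℕ →ᵇ ℝ} (h : Adm d) {z z' : ℂ} (hz : z ∈ quadDomain (quadMap d))
    (hz' : z' ∈ quadDomain (quadMap d)) (hs : 0 < z.re ↔ 0 < z'.re) :
    z' ∈ connectedComponentIn (quadDomain (quadMap d)) z := by
  obtain ⟨ρ, hρ, hcont, huniq⟩ := h.exists_branch
  have hcon : IsPreconnected (ball (0 : ℂ) 1) := (convex_ball (0 : ℂ) 1).isPreconnected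
  have hc := hcont.mono ball_subset_closedBall
  obtain ⟨a1, a2⟩ := mem_quadDomain.1 hz
  obtain ⟨b1, b2⟩ := mem_quadDomain.1 hz'
  by_cases hp : 0 < z.re
  · have hp' := hs.1 hp
    refine (hcon.image ρ hc).subset_connectedComponentIn
      ⟨_, mem_ball_zero_iff.2 a1, (huniq _ a1.le z a2.le hp rfl).symm⟩ ?_
      ⟨_, mem_ball_zero_iff.2 b1, (huniq _ b1.le z' b2.le hp' rfl).symm⟩
    rintro _ ⟨v, hv, rfl⟩
    rw [mem_ball_zero_iff] at hv
    obtain ⟨-, c1, c2⟩ := hρ v hv.le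
    exact mem_quadDomain.2 ⟨by rwa [c2], c1⟩
  · have hp' := fun q => hp (hs.2 q)
    have key : ∀ w ∈ quadDomain (quadMap d), ¬ 0 < w.re → -ρ (quadMap d w) = w := by
      intro w hw hwp
      obtain ⟨c1, c2⟩ := mem_quadDomain.1 hw
      have hre := h.re_bound' hw
      rw [abs_of_nonpos (not_lt.1 hwp)] at hre
      rw [← huniq _ c1.le (-w) (by rw [norm_neg]; exact c2.le)
        (by rw [Complex.neg_re]; linarith) (quadMap_neg d w), neg_neg]
    refine (hcon.image (fun v => -ρ v) hc.neg).subset_connectedComponentIn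
      ⟨_, mem_ball_zero_iff.2 a1, key z hz hp⟩ ?_ ⟨_, mem_ball_zero_iff.2 b1, key z' hz' hp'⟩
    rintro _ ⟨v, hv, rfl⟩
    rw [mem_ball_zero_iff] at hv
    obtain ⟨-, c1, c2⟩ := hρ v hv.le
    exact mem_quadDomain.2 ⟨by rwa [quadMap_neg, c2], by rwa [norm_neg]⟩

/-- Multipliers of fixed points are invariant under conjugacy. -/
lemma multiplier_eq {d : ℕ →ᵇ ℝ} {Φ : ℂ → ℂ} (hΦ : DifferentiableOn ℂ Φ (ball 0 1))
    (hinj : InjOn Φ (ball 0 1)) {x : ℂ} (hx : x ∈ ball (0 : ℂ) 1) (hfix : quadMap d x = x) {a b : ℂ}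
    (hab : ∀ᶠ z in 𝓝 x, Φ (quadMap d z) = a * Φ z + b) :
    2 * x * (4 + egf (shift d) (x ^ 2)) = a := by
  have hne := deriv_ne_zero_of_injOn isOpen_ball hΦ hinj hx
  have hd : HasDerivAt Φ (deriv Φ x) x := (hΦ.differentiableAt (isOpen_ball.mem_nhds hx)).hasDerivAt
  have hd' : HasDerivAt Φ (deriv Φ x) (quadMap d x) := by rwa [hfix]
  have h1 := hd'.comp x (hasDerivAt_quadMap d x)
  have h2 := (hd.const_mul a).add_const b
  have h3 := h1.unique (h2.congr_of_eventuallyEq hab)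
  rw [mul_comm a] at h3
  exact mul_left_cancel₀ hne h3

/-- Suppose `Φ` conjugates the map to an affine one, with slopes `a` and `a'` on the right and left
components; these are the multipliers at the fixed points `α > 0` and `γ < 0`. Evenness gives
`a Φ(z) + b = a' Φ(-z) + b'` near `α`, hence on the whole disk, and differentiating at
`0` gives `a = -a'`. But `α` is close to `(1 + √33)/8` and `γ` to `(1 - √33)/8`, so the multipliers
are not opposite. -/
lemma Adm.not_conjugate {d : ℕ →ᵇ ℝ} (h : Adm d) :
    ¬ ConjugateToAffineQuadLike (quadMap d) (quadDomain (quadMap d)) (ball (0 : ℂ) 1) := by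
  rintro ⟨Φ, hΦ, hinj, hconj⟩
  have hopen : IsOpen (quadDomain (quadMap d)) := h.isEscapingQuadLike.isOpen_U
  obtain ⟨α, hα, hα'⟩ := h.exists_cycle [true]
  obtain ⟨γ, hγ, hγ'⟩ := h.exists_cycle [false]
  have hα0 : 0 < α := by simpa using (hα' 0 (by simp)).2
  have hγ0 : γ ≤ 0 := by simpa using (hγ' 0 (by simp)).2
  have hα1 : quadMap d α = α := by rw [quadMap_ofReal]; congr 1
  have hγ1 : quadMap d γ = γ := by rw [quadMap_ofReal]; congr 1
  have hαU : (α : ℂ) ∈ quadDomain (quadMap d) := h.orbit_mem le_rfl hα1 0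
  have hγU : (γ : ℂ) ∈ quadDomain (quadMap d) := h.orbit_mem le_rfl hγ1 0
  obtain ⟨a, b, hab⟩ := hconj α hαU
  obtain ⟨a', b', hab'⟩ := hconj γ hγU
  have hconα : ∀ᶠ z in 𝓝 (α : ℂ), Φ (quadMap d z) = a * Φ z + b :=
    mem_of_superset (hopen.connectedComponentIn.mem_nhds (mem_connectedComponentIn hαU)) hab
  have hconγ : ∀ᶠ z in 𝓝 (γ : ℂ), Φ (quadMap d z) = a' * Φ z + b' :=
    mem_of_superset (hopen.connectedComponentIn.mem_nhds (mem_connectedComponentIn hγU)) hab'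
  have hmα := multiplier_eq hΦ hinj hαU.2 hα1 hconα
  have hmγ := multiplier_eq hΦ hinj hγU.2 hγ1 hconγ
  have hnegα : -(α : ℂ) ∈ quadDomain (quadMap d) := by
    rw [mem_quadDomain, quadMap_neg, norm_neg]; exact mem_quadDomain.1 hαU
  -- the two affine models agree along `z ↦ -z` near `α`, hence on the whole disk
  have hloc : (fun z => a * Φ z + b) =ᶠ[𝓝 (α : ℂ)] fun z => a' * Φ (-z) + b' := by
    have hcomp : -(α : ℂ) ∈ connectedComponentIn (quadDomain (quadMap d)) γ :=
      h.mem_component hγU hnegα (by simp [hγ0.not_gt, hα0.not_gt])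
    have hev : ∀ᶠ z in 𝓝 (α : ℂ), -z ∈ connectedComponentIn (quadDomain (quadMap d)) γ :=
      continuous_neg.continuousAt.eventually (hopen.connectedComponentIn.mem_nhds hcomp)
    filter_upwards [hconα, hev] with z h1 h2
    rw [← h1, ← hab' _ h2, quadMap_neg]
  have hneg : DifferentiableOn ℂ (fun z => Φ (-z)) (ball 0 1) :=
    hΦ.comp (differentiableOn_neg _) fun z hz => by simpa using hz
  have hall : EqOn (fun z => a * Φ z + b) (fun z => a' * Φ (-z) + b') (ball 0 1) :=
    AnalyticOnNhd.eqOn_of_preconnected_of_eventuallyEq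
      (((hΦ.const_mul a).add_const b).analyticOnNhd isOpen_ball)
      (((hneg.const_mul a').add_const b').analyticOnNhd isOpen_ball)
      (convex_ball (0 : ℂ) 1).isPreconnected hαU.2 hloc
  have h0 : (0 : ℂ) ∈ ball (0 : ℂ) 1 := by simp
  have hne := deriv_ne_zero_of_injOn isOpen_ball hΦ hinj h0
  have hd0 : HasDerivAt Φ (deriv Φ 0) 0 := (hΦ.differentiableAt (isOpen_ball.mem_nhds h0)).hasDerivAt
  have hd1 : HasDerivAt (fun z => Φ (-z)) (deriv Φ 0 * -1) 0 := by
    have hd0' : HasDerivAt Φ (deriv Φ 0) (-0) := by rwa [neg_zero]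
    exact hd0'.comp 0 (hasDerivAt_neg 0)
  have haa : a = -a' := by
    have e := ((hd0.const_mul a).add_const b).unique
      (((hd1.const_mul a').add_const b').congr_of_eventuallyEq
        (hall.eventuallyEq_of_mem (isOpen_ball.mem_nhds h0)))
    refine mul_right_cancel₀ hne ?_
    rw [e]; ring
  -- numerical estimate of the two multipliers
  rw [← Complex.ofReal_pow, egf_ofReal] at hmα hmγ
  have hreal : 2 * α * (4 + egfR (_root_.shift d) (α ^ 2)) = -(2 * γ * (4 + egfR (_root_.shift d) (γ ^ 2))) := by
    have : (2 * α * (4 + egfR (_root_.shift d) (α ^ 2)) : ℂ) =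
      -(2 * γ * (4 + egfR (_root_.shift d) (γ ^ 2))) := by rw [hmα, hmγ, haa]
    exact_mod_cast this
  have habs : ∀ x : ℝ, (x : ℂ) ∈ quadDomain (quadMap d) → |x ^ 2| ≤ 1 := fun x hx => by
    have := (mem_quadDomain.1 hx).2
    rw [Complex.norm_real, Real.norm_eq_abs] at this
    rw [abs_pow]; exact pow_le_one₀ (abs_nonneg _) this.le
  have a1 := abs_le.1 (h.abs_egfR_le (habs α hαU))
  have a2 := abs_le.1 (h.shift.abs_egfR_le (habs α hαU))
  have c1 := abs_le.1 (h.abs_egfR_le (habs γ hγU))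
  have c2 := abs_le.1 (h.shift.abs_egfR_le (habs γ hγU))
  have e1 : 4 * α ^ 2 - 2 + egfR d (α ^ 2) = α := hα
  have e2 : 4 * γ ^ 2 - 2 + egfR d (γ ^ 2) = γ := hγ
  have hα8 : 4 / 5 < α := by
    by_contra! hcon
    nlinarith
  have hγ6 : -(13 / 20) < γ := by
    by_contra! hcon
    nlinarith
  have l1 : 2 * (4 / 5) * (39 / 10) ≤ 2 * α * (4 + egfR (_root_.shift d) (α ^ 2)) :=
    mul_le_mul (by linarith) (by linarith) (by norm_num) (by linarith)
  have l2 : 2 * -γ * (4 + egfR (_root_.shift d) (γ ^ 2)) ≤ 2 * (13 / 20) * (41 / 10) :=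
    mul_le_mul (by linarith) (by linarith) (by linarith) (by norm_num)
  linarith

end

/-! ### The theorem -/

/-- **Theorem.** There exists a real, even and transcendental entire map `f : ℂ → ℂ`
such that `f : ℝ → ℝ` is convex, `f(ℚ) ⊆ ℚ`, the periodic points of
`f : f⁻¹(𝔻) ∩ 𝔻 → 𝔻` and of `f : ℝ → ℝ` coincide and all lie in `ℚ` with multipliers
in `ℚ`, and `f : f⁻¹(𝔻) ∩ 𝔻 → 𝔻` is an escaping quadratic-like map that is not
conjugate to an affine escaping quadratic-like map. -/
theorem exists_transcendental_escaping_quadlike_with_rational_multipliers :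
    ∃ f : ℂ → ℂ, Differentiable ℂ f ∧
      (∀ z, f (starRingEnd ℂ z) = starRingEnd ℂ (f z)) ∧
      (∀ z, f (-z) = f z) ∧
      (¬ ∃ P : Polynomial ℂ, f = fun z => P.eval z) ∧
      ConvexOn ℝ Set.univ (fun x : ℝ => (f x).re) ∧
      (∀ q : ℚ, ∃ r : ℚ, f (q : ℂ) = (r : ℂ)) ∧
      ({x : ℂ | x ∈ quadDomain f ∧
          ∃ p : ℕ, 1 ≤ p ∧ (∀ k < p, f^[k] x ∈ quadDomain f) ∧ f^[p] x = x}
        = {x : ℂ | x.im = 0 ∧ ∃ p : ℕ, 1 ≤ p ∧ f^[p] x = x}) ∧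
      (∀ x : ℂ, x.im = 0 → (∃ p : ℕ, 1 ≤ p ∧ f^[p] x = x) →
        (∃ q : ℚ, x = (q : ℂ)) ∧
        (∃ q : ℚ, deriv (f^[minimalPeriod f x]) x = (q : ℂ))) ∧
      IsEscapingQuadLike f (quadDomain f) (ball (0 : ℂ) 1) ∧
      ¬ ConjugateToAffineQuadLike f (quadDomain f) (ball (0 : ℂ) 1) := by
  obtain ⟨d, h, hrat, hcyc⟩ := exists_coeffs
  have horb : ∀ (x : ℂ) (p : ℕ), x.im = 0 → 1 ≤ p → (quadMap d)^[p] x = x →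
      ∀ k, (quadMap d)^[k] x ∈ quadDomain (quadMap d) := by
    intro x p hx hp hfix k
    have e : ((x.re : ℝ) : ℂ) = x := Complex.ext rfl (by simp [hx])
    rw [← e] at hfix ⊢
    exact h.orbit_mem hp hfix k
  refine ⟨quadMap d, differentiable_quadMap d, quadMap_conj d, quadMap_neg d, h.not_polynomial,
    convexOn_quadMap h, quadMap_ratCast hrat, ?_, ?_, h.isEscapingQuadLike, h.not_conjugate⟩
  · ext x
    constructor
    · rintro ⟨-, p, hp, hk, hfix⟩
      obtain ⟨q, rfl⟩ := h.periodic_rat hcyc hp hk hfix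
      exact ⟨by simp, p, hp, hfix⟩
    · rintro ⟨hx, p, hp, hfix⟩
      exact ⟨horb x p hx hp hfix 0, p, hp, fun k _ => horb x p hx hp hfix k, hfix⟩
  · rintro x hx ⟨p, hp, hfix⟩
    obtain ⟨q, rfl⟩ := h.periodic_rat hcyc hp (fun k _ => horb x p hx hp hfix k) hfix
    obtain ⟨-, m, hm⟩ := hasDerivAt_iterate_rat hrat q (minimalPeriod (quadMap d) q)
    exact ⟨⟨q, rfl⟩, m, hm.deriv⟩
end

section
/- For every finite subset A of ℂ such that A^sym = A, every b ∈ (ℝ ∪ iℝ) \ A and every ζ ∈ ℝ, there exists a real and even polynomial map P : ℂ → ℂ of degree at most 2|A| such that P(a) = 0 and P'(a) = 0 for all a ∈ A, and P(b) = ζ. -/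
/-!
The square `R` of the nodal polynomial `∏ a ∈ A, (X - a)` has degree `2|A|` and a zero of order
at least two at each point of `A`. Reindexing the product by conjugation shows that `R` is real,
and reindexing by negation shows that the nodal polynomial is even or odd, so that `R` is even.
On either axis `conj b = ± b`, hence `conj (R b) = R (conj b) = R b`, i.e. `R b` is real; it is
nonzero because `b ∉ A`. Thus `(ζ / R b) • R` is the required polynomial.
-/

open Polynomial in
/-- The nodal polynomial of a conjugation-invariant set has real coefficients. -/
lemma map_conj_nodal (A : Finset ℂ) (hA : ∀ a ∈ A, starRingEnd ℂ a ∈ A) :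
    (∏ a ∈ A, (X - C a)).map (starRingEnd ℂ) = ∏ a ∈ A, (X - C a) := by
  rw [Polynomial.map_prod]
  refine Finset.prod_bij' (fun a _ => starRingEnd ℂ a) (fun a _ => starRingEnd ℂ a)
    hA hA ?_ ?_ ?_ <;> simp

open Polynomial in
/-- The square removes the sign `(-1) ^ |A|` by which the nodal polynomial may fail to be even. -/
lemma eval_neg_nodal_sq (A : Finset ℂ) (hA : ∀ a ∈ A, -a ∈ A) (z : ℂ) :
    ((∏ a ∈ A, (X - C a)) ^ 2).eval (-z) = ((∏ a ∈ A, (X - C a)) ^ 2).eval z := by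
  simp only [eval_pow, eval_prod, eval_sub, eval_X, eval_C, ← Finset.prod_pow]
  refine Finset.prod_bij' (fun a _ => -a) (fun a _ => -a) hA hA ?_ ?_ ?_
  · simp
  · simp
  · intro a _
    ring

/-- **Lemma (real even interpolation of a value on the axes).** For every finite subset
`A` of `ℂ` symmetric with respect to the real and imaginary axes (`A^sym = A`), every
`b ∈ (ℝ ∪ iℝ) \ A` and every real `ζ`, there exists a real and even polynomial `P` of
degree at most `2|A|` vanishing together with its derivative on `A`,
with `P(b) = ζ`. -/
theorem exists_real_even_polynomial_value_on_axes (A : Finset ℂ)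
    (hAconj : ∀ a ∈ A, starRingEnd ℂ a ∈ A) (hAneg : ∀ a ∈ A, -a ∈ A)
    (b : ℂ) (hbax : b.im = 0 ∨ b.re = 0) (hbA : b ∉ A) (ζ : ℝ) :
    ∃ P : Polynomial ℂ, P.natDegree ≤ 2 * A.card ∧
      (∀ n : ℕ, (P.coeff n).im = 0) ∧
      (∀ z : ℂ, P.eval (-z) = P.eval z) ∧
      (∀ a ∈ A, P.eval a = 0) ∧ (∀ a ∈ A, P.derivative.eval a = 0) ∧
      P.eval b = (ζ : ℂ) := by
  open Polynomial in
  set Q : ℂ[X] := ∏ a ∈ A, (X - C a) with hQ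
  have hmap : (Q ^ 2).map (starRingEnd ℂ) = Q ^ 2 := by
    rw [Polynomial.map_pow, hQ, map_conj_nodal A hAconj]
  have heven : ∀ z, (Q ^ 2).eval (-z) = (Q ^ 2).eval z := eval_neg_nodal_sq A hAneg
  have hQA : ∀ a ∈ A, Q.eval a = 0 := by
    intro a ha
    rw [hQ, eval_prod]
    exact Finset.prod_eq_zero ha (by simp)
  have hb0 : (Q ^ 2).eval b ≠ 0 := by
    rw [eval_pow, hQ, eval_prod]
    refine pow_ne_zero _ (Finset.prod_ne_zero_iff.mpr fun a ha h => hbA ?_)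
    have : b = a := by simpa [sub_eq_zero] using h
    exact this ▸ ha
  have hbconj : starRingEnd ℂ b = b ∨ starRingEnd ℂ b = -b := by
    rcases hbax with h | h
    · left
      apply Complex.ext <;> simp [h]
    · right
      apply Complex.ext <;> simp [h]
  have hbreal : starRingEnd ℂ ((Q ^ 2).eval b) = (Q ^ 2).eval b := by
    rw [← Polynomial.eval_map_apply, hmap]
    rcases hbconj with h | h
    · rw [h]
    · rw [h, heven]
  obtain ⟨r, hr⟩ := Complex.conj_eq_iff_real.mp hbreal
  have hdeg : Q.natDegree = A.card := by
    rw [hQ, natDegree_finsetProd_X_sub_C_eq_card]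
  refine ⟨C ((ζ / r : ℝ) : ℂ) * Q ^ 2, ?_, ?_, ?_, ?_, ?_, ?_⟩
  · refine (natDegree_C_mul_le _ _).trans (natDegree_pow_le.trans ?_)
    rw [hdeg]
  · intro n
    have h : starRingEnd ℂ ((Q ^ 2).coeff n) = (Q ^ 2).coeff n := by
      rw [← coeff_map, hmap]
    rw [coeff_C_mul, Complex.im_ofReal_mul, Complex.conj_eq_iff_im.mp h, mul_zero]
  · intro z
    rw [eval_mul, eval_mul, heven, eval_C, eval_C]
  · intro a ha
    simp [hQA a ha]
  · intro a ha
    simp [derivative_pow, hQA a ha]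
  · have hr0 : (r : ℂ) ≠ 0 := hr ▸ hb0
    rw [eval_mul, eval_C, hr, Complex.ofReal_div, div_mul_cancel₀ _ hr0]
end

section
/- For every finite subset A of ℂ such that A^sym = A, every b ∈ ℂ \ (ℝ ∪ iℝ ∪ A) and every ζ ∈ ℂ, there exists a real and even polynomial map P : ℂ → ℂ of degree at most 2|A| + 2 such that P(a) = 0 and P'(a) = 0 for all a ∈ A, and P(b) = ζ. -/
/-!
Let `Q = ∏ a ∈ A, (X - a)`. Symmetry of `A` under conjugation makes `Q` real, and symmetry under
`z ↦ -z` gives `Q(-z) = (-1)^|A| Q(z)`, so `Q ^ 2` is real and even, and it vanishes to second order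
on `A`. Multiplying by a real polynomial `α + β X ^ 2` preserves all of this, and since `b ^ 2` is
not real, `1` and `b ^ 2` span `ℂ` over `ℝ`; hence `α + β b ^ 2` can be made equal to
`ζ / Q(b) ^ 2`.
-/

open Polynomial in
/-- The monic polynomial with simple roots at `A` is real when `A` is closed under conjugation. -/
lemma map_conj_prod_X_sub_C (A : Finset ℂ) (hAconj : ∀ a ∈ A, starRingEnd ℂ a ∈ A) :
    (∏ a ∈ A, (X - C a)).map (starRingEnd ℂ) = ∏ a ∈ A, (X - C a) := by
  rw [Polynomial.map_prod]
  refine Finset.prod_bij' (fun a _ => starRingEnd ℂ a) (fun a _ => starRingEnd ℂ a)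
    hAconj hAconj ?_ ?_ ?_ <;> simp

open Polynomial in
lemma eval_neg_prod_X_sub_C (A : Finset ℂ) (hAneg : ∀ a ∈ A, -a ∈ A) (z : ℂ) :
    (∏ a ∈ A, (X - C a)).eval (-z) = (-1) ^ A.card * (∏ a ∈ A, (X - C a)).eval z := by
  rw [eval_prod, eval_prod, ← Finset.prod_const, ← Finset.prod_mul_distrib]
  refine Finset.prod_bij' (fun a _ => -a) (fun a _ => -a) hAneg hAneg ?_ ?_ ?_
  · simp
  · simp
  · intro a _
    simp only [eval_sub, eval_X, eval_C]
    ring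

/-- For `b` off both axes, `1` and `b ^ 2` span `ℂ` over `ℝ`. -/
lemma exists_real_add_mul_sq_eq (b : ℂ) (hbre : b.im ≠ 0) (hbim : b.re ≠ 0) (w : ℂ) :
    ∃ α β : ℝ, (α : ℂ) + β * b ^ 2 = w := by
  refine ⟨w.re - w.im / (2 * b.re * b.im) * (b ^ 2).re, w.im / (2 * b.re * b.im), ?_⟩
  apply Complex.ext
  · rw [Complex.add_re, Complex.re_ofReal_mul, Complex.ofReal_re]
    ring
  · rw [Complex.add_im, Complex.im_ofReal_mul, Complex.ofReal_im]
    have h : (b ^ 2).im = 2 * b.re * b.im := by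
      rw [sq, Complex.mul_im]; ring
    rw [h]
    field_simp
    ring

/-- **Lemma (real even interpolation of a value off the axes).** For every finite subset
`A` of `ℂ` symmetric with respect to the real and imaginary axes (`A^sym = A`), every
`b ∈ ℂ \ (ℝ ∪ iℝ ∪ A)` and every `ζ ∈ ℂ`, there exists a real and even polynomial `P`
of degree at most `2|A| + 2` vanishing together with its derivative on `A`,
with `P(b) = ζ`. -/
theorem exists_real_even_polynomial_value_off_axes (A : Finset ℂ)
    (hAconj : ∀ a ∈ A, starRingEnd ℂ a ∈ A) (hAneg : ∀ a ∈ A, -a ∈ A)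
    (b : ℂ) (hbre : b.im ≠ 0) (hbim : b.re ≠ 0) (hbA : b ∉ A) (ζ : ℂ) :
    ∃ P : Polynomial ℂ, P.natDegree ≤ 2 * A.card + 2 ∧
      (∀ n : ℕ, (P.coeff n).im = 0) ∧
      (∀ z : ℂ, P.eval (-z) = P.eval z) ∧
      (∀ a ∈ A, P.eval a = 0) ∧ (∀ a ∈ A, P.derivative.eval a = 0) ∧
      P.eval b = ζ := by
  open Polynomial in
  have hconj := map_conj_prod_X_sub_C A hAconj
  have hneg := eval_neg_prod_X_sub_C A hAneg
  have hdeg : (∏ a ∈ A, (X - C a)).natDegree = A.card := natDegree_finsetProd_X_sub_C_eq_card A id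
  have hroot : ∀ a ∈ A, (∏ a ∈ A, (X - C a)).eval a = 0 := fun a ha => by
    rw [eval_prod]
    exact Finset.prod_eq_zero ha (by simp)
  have hb : (∏ a ∈ A, (X - C a)).eval b ≠ 0 := by
    rw [eval_prod, Finset.prod_ne_zero_iff]
    intro a ha h
    rw [eval_sub, eval_X, eval_C, sub_eq_zero] at h
    exact hbA (h ▸ ha)
  generalize (∏ a ∈ A, (X - C a)) = Q at *
  obtain ⟨α, β, h⟩ := exists_real_add_mul_sq_eq b hbre hbim (ζ / Q.eval b ^ 2)
  refine ⟨Q ^ 2 * (C (α : ℂ) + C (β : ℂ) * X ^ 2), ?_, fun n => ?_, fun z => ?_, fun a ha => ?_,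
    fun a ha => ?_, ?_⟩
  · refine natDegree_mul_le.trans (add_le_add ?_ ?_)
    · exact hdeg ▸ natDegree_pow_le
    · compute_degree
  · rw [← Complex.conj_eq_iff_im, ← coeff_map]
    simp [Polynomial.map_mul, hconj]
  · have hsign : ((-1 : ℂ) ^ A.card) ^ 2 = 1 := by
      rw [← pow_mul, mul_comm, pow_mul]; simp
    simp [hneg, mul_pow, hsign]
  · simp [hroot a ha]
  · simp [hroot a ha, derivative_mul, derivative_pow]
  · simp only [eval_mul, eval_pow, eval_add, eval_C, eval_X, h]
    field_simp
end

section
/- Let f₀ : ℂ → ℂ be defined by f₀(z) = 10·cosh(z) − 12. Then D(−2, 4) ⊆ f₀(D(0, 1)) ⊆ D(−2, 7) and D(−2, 9) ⊆ f₀(D(0, 2)), where f₀(D(0,r)) denotes the image of the open disk D(0,r) under f₀. -/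
/-!
Write `f₀(z) + 2 = 10 (cosh z - 1) = 20 sinh² (z / 2)`.

The upper inclusion follows from `‖cosh z - 1‖ ≤ 14/25` on the closed unit disk, a truncated
Taylor estimate (`norm_cosh_sub_one_le`).

For the lower inclusions, given `w ∈ D(-2, R)`, choose `s` with `20 s² = w + 2` and solve
`sinh u = s`; then `z = 2 u`. The equation is solved by Banach's fixed point theorem for
`u ↦ s - (sinh u - u)` on a closed disk of radius `r ≤ 1` (`exists_sinh_eq`): it is a contraction
because its derivative is `1 - cosh u`, and it preserves the disk because
`‖sinh u - u‖ ≤ r³/6 + r⁵/100` there. With `r = 1/2` and `r = 1` this suffices for `‖s‖² < 1/5`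
and `‖s‖² < 9/20`, that is, for `R = 4` and `R = 9`.
-/

open Metric

lemma norm_cosh_sub_one_le {u : ℂ} (hu : ‖u‖ ≤ 1) : ‖Complex.cosh u - 1‖ ≤ 14 / 25 := by
  have h1 := Complex.exp_bound hu (n := 4) (by norm_num)
  have h2 := Complex.exp_bound (x := -u) (by simpa using hu) (n := 4) (by norm_num)
  simp only [Finset.sum_range_succ, Finset.sum_range_zero, Nat.factorial, norm_neg] at h1 h2
  norm_num at h1 h2
  set A := Complex.exp u - (1 + u + u ^ 2 / 2 + u ^ 3 / 6) with hA
  set B := Complex.exp (-u) - (1 + -u + u ^ 2 / 2 + (-u) ^ 3 / 6) with hB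
  have e : Complex.cosh u - 1 = u ^ 2 / 2 + (A + B) / 2 := by
    rw [Complex.cosh, hA, hB]; ring
  have hn : ‖u ^ 2 / 2 + (A + B) / 2‖ ≤ ‖u‖ ^ 2 / 2 + (‖A‖ + ‖B‖) / 2 := by
    refine (norm_add_le _ _).trans ?_
    simp only [norm_div, norm_pow, Complex.norm_ofNat]
    linarith [norm_add_le A B]
  have p2 : ‖u‖ ^ 2 ≤ 1 := pow_le_one₀ (norm_nonneg _) hu
  have p4 : ‖u‖ ^ 4 ≤ 1 := pow_le_one₀ (norm_nonneg _) hu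
  rw [e]
  linarith

lemma norm_sinh_sub_self_le {u : ℂ} (hu : ‖u‖ ≤ 1) :
    ‖Complex.sinh u - u‖ ≤ ‖u‖ ^ 3 / 6 + ‖u‖ ^ 5 / 100 := by
  have h1 := Complex.exp_bound hu (n := 5) (by norm_num)
  have h2 := Complex.exp_bound (x := -u) (by simpa using hu) (n := 5) (by norm_num)
  simp only [Finset.sum_range_succ, Finset.sum_range_zero, Nat.factorial, norm_neg] at h1 h2
  norm_num at h1 h2
  set A := Complex.exp u - (1 + u + u ^ 2 / 2 + u ^ 3 / 6 + u ^ 4 / 24) with hA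
  set B := Complex.exp (-u) - (1 + -u + u ^ 2 / 2 + (-u) ^ 3 / 6 + u ^ 4 / 24) with hB
  have e : Complex.sinh u - u = u ^ 3 / 6 + (A - B) / 2 := by
    rw [Complex.sinh, hA, hB]; ring
  have hn : ‖u ^ 3 / 6 + (A - B) / 2‖ ≤ ‖u‖ ^ 3 / 6 + (‖A‖ + ‖B‖) / 2 := by
    refine (norm_add_le _ _).trans ?_
    simp only [norm_div, norm_pow, Complex.norm_ofNat]
    linarith [norm_sub_le A B]
  rw [e]
  linarith

/-- A quantitative inverse function theorem for `sinh` at `0`; the solution is the fixed point of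
the contraction `u ↦ s - (sinh u - u)` of the closed disk of radius `r`. -/
lemma exists_sinh_eq {s : ℂ} {r : ℝ} (hr0 : 0 ≤ r) (hr1 : r ≤ 1)
    (h : ‖s‖ + (r ^ 3 / 6 + r ^ 5 / 100) < r) : ∃ u : ℂ, ‖u‖ < r ∧ Complex.sinh u = s := by
  let g : ℂ → ℂ := fun u => s - (Complex.sinh u - u)
  have hg : ∀ u : ℂ, ‖u‖ ≤ r → ‖g u‖ < r := by
    intro u hu
    have h3 : ‖u‖ ^ 3 ≤ r ^ 3 := by gcongr
    have h5 : ‖u‖ ^ 5 ≤ r ^ 5 := by gcongr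
    linarith [norm_sub_le s (Complex.sinh u - u), norm_sinh_sub_self_le (hu.trans hr1)]
  have hmaps : Set.MapsTo g (closedBall 0 r) (closedBall 0 r) := by
    intro u hu
    rw [mem_closedBall_zero_iff] at hu ⊢
    exact (hg u hu).le
  have hd : ∀ u : ℂ, HasDerivAt g (-(Complex.cosh u - 1)) u := fun u =>
    ((Complex.hasDerivAt_sinh u).sub (hasDerivAt_id u)).const_sub s
  have hlip : LipschitzOnWith (14 / 25) g (closedBall 0 r) := by
    refine (convex_closedBall _ _).lipschitzOnWith_of_nnnorm_hasDerivWithin_le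
      (fun u _ => (hd u).hasDerivWithinAt) fun u hu => ?_
    rw [mem_closedBall_zero_iff] at hu
    rw [← NNReal.coe_le_coe, coe_nnnorm, norm_neg]
    exact_mod_cast norm_cosh_sub_one_le (hu.trans hr1)
  have hc : ContractingWith (14 / 25) (hmaps.restrict g _ _) :=
    ⟨by rw [← NNReal.coe_lt_coe]; norm_num, hlip.mapsToRestrict hmaps⟩
  obtain ⟨u, hu, hfix, -⟩ := hc.exists_fixedPoint' isClosed_closedBall.isComplete hmaps
    (mem_closedBall_self hr0) (edist_ne_top _ _)
  have hfix' : s - (Complex.sinh u - u) = u := hfix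
  refine ⟨u, ?_, by linear_combination -hfix'⟩
  have := hg u (mem_closedBall_zero_iff.1 hu)
  rwa [show g u = u from hfix] at this

/-- Lower inclusion for a general radius: the disk `D(-2, R)` is covered by the image of
`D(0, 2 r)` as soon as some `a` bounds the square roots `s` of the points of `D(0, R / 20)` and
satisfies the hypothesis of `exists_sinh_eq`. -/
lemma ball_subset_image {R r a : ℝ} (hr0 : 0 ≤ r) (hr1 : r ≤ 1) (ha0 : 0 ≤ a)
    (ha : R ≤ 20 * a ^ 2) (h : a + (r ^ 3 / 6 + r ^ 5 / 100) < r) :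
    ball (-2 : ℂ) R ⊆ (fun z => 10 * Complex.cosh z - 12) '' ball (0 : ℂ) (2 * r) := by
  intro w hw
  rw [mem_ball, dist_eq_norm] at hw
  obtain ⟨s, hs⟩ := IsAlgClosed.exists_pow_nat_eq ((w - -2) / 20) (n := 2) (by norm_num)
  have hsn : ‖s‖ ^ 2 < a ^ 2 := by
    rw [← norm_pow, hs, norm_div, Complex.norm_ofNat]
    linarith
  have hsa : ‖s‖ < a := lt_of_pow_lt_pow_left₀ 2 ha0 hsn
  obtain ⟨u, hu, hsu⟩ := exists_sinh_eq (s := s) hr0 hr1 (by linarith)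
  refine ⟨2 * u, ?_, ?_⟩
  · rw [mem_ball_zero_iff, norm_mul, Complex.norm_ofNat]
    linarith
  · have h2 := Complex.cosh_sq u
    simp only [Complex.cosh_two_mul]
    rw [h2, hsu]
    linear_combination 20 * hs

/-- **Lemma.** For `f₀(z) = 10·cosh(z) − 12`, one has
`D(−2, 4) ⊆ f₀(D(0, 1)) ⊆ D(−2, 7)` and `D(−2, 9) ⊆ f₀(D(0, 2))`. -/
theorem image_disks_of_ten_cosh_sub_twelve :
    ball (-2 : ℂ) 4 ⊆ (fun z => 10 * Complex.cosh z - 12) '' ball (0 : ℂ) 1 ∧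
    (fun z => 10 * Complex.cosh z - 12) '' ball (0 : ℂ) 1 ⊆ ball (-2 : ℂ) 7 ∧
    ball (-2 : ℂ) 9 ⊆ (fun z => 10 * Complex.cosh z - 12) '' ball (0 : ℂ) 2 := by
  refine ⟨?_, ?_, ?_⟩
  -- `0.45` is slightly above `√(4 / 20)`
  · have := ball_subset_image (R := 4) (r := 1 / 2) (a := 0.45)
      (by norm_num) (by norm_num) (by norm_num) (by norm_num) (by norm_num)
    simpa using this
  · rintro _ ⟨z, hz, rfl⟩
    rw [mem_ball_zero_iff] at hz
    rw [mem_ball, dist_eq_norm,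
      show 10 * Complex.cosh z - 12 - -2 = 10 * (Complex.cosh z - 1) by ring, norm_mul,
      Complex.norm_ofNat]
    linarith [norm_cosh_sub_one_le hz.le]
  -- `0.7` is above `√(9 / 20)`
  · have := ball_subset_image (R := 9) (r := 1) (a := 0.7)
      (by norm_num) (by norm_num) (by norm_num) (by norm_num) (by norm_num)
    simpa using this
end

section
/- Let f : ℝ → ℝ be an even convex function with f(0) < 0 and f(1) > 1. Then f(x) > x for all x ∈ [1, +∞), and every periodic point of f : ℝ → ℝ lies in the open interval (−1, 1); that is, if x ∈ ℝ and f^p(x) = x for some integer p ≥ 1, then −1 < x < 1. -/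
/-- **Lemma (periodic points of an even convex map).** If `f : ℝ → ℝ` is even and
convex with `f(0) < 0` and `f(1) > 1`, then `f(x) > x` for all `x ≥ 1`, and every
periodic point of `f` lies in the open interval `(−1, 1)`. -/
theorem periodic_points_of_even_convex (f : ℝ → ℝ)
    (heven : ∀ x : ℝ, f (-x) = f x)
    (hconv : ConvexOn ℝ Set.univ f)
    (h0 : f 0 < 0) (h1 : 1 < f 1) :
    (∀ x : ℝ, 1 ≤ x → x < f x) ∧
    ∀ (x : ℝ) (p : ℕ), 1 ≤ p → f^[p] x = x → -1 < x ∧ x < 1 := by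
  have key : ∀ x : ℝ, 1 ≤ x → x < f x := by
    intro x hx
    have hx0 : 0 < x := by linarith
    -- Convexity along `1 = (1 - x⁻¹) * 0 + x⁻¹ * x`.
    have h := hconv.2 (Set.mem_univ 0) (Set.mem_univ x)
      (sub_nonneg.2 (inv_le_one_of_one_le₀ hx)) (inv_nonneg.2 hx0.le) (by ring)
    simp only [smul_eq_mul, mul_zero, zero_add, inv_mul_cancel₀ hx0.ne'] at h
    have h2 : (1 - x⁻¹) * f 0 ≤ 0 :=
      mul_nonpos_of_nonneg_of_nonpos (sub_nonneg.2 (inv_le_one_of_one_le₀ hx)) h0.le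
    have h3 : 1 < x⁻¹ * f x := by linarith
    rwa [inv_mul_eq_div, one_lt_div hx0] at h3
  refine ⟨key, fun x p hp hfix => ?_⟩
  rw [← abs_lt]
  by_contra! hx
  -- Evenness gives `f x = f |x| > |x| ≥ 1`, after which the orbit keeps increasing,
  -- so it never returns to `x ≤ |x|`.
  have hiter : ∀ n : ℕ, |x| < f^[n + 1] x := by
    intro n
    induction n with
    | zero =>
      have habs : f |x| = f x := by
        rcases abs_choice x with h | h <;> simp [h, heven]
      simpa [habs] using key |x| hx
    | succ n ih =>
      rw [Function.iterate_succ_apply']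
      exact ih.trans (key _ (hx.trans ih.le))
  have h := hiter (p - 1)
  rw [Nat.sub_add_cancel hp, hfix] at h
  exact absurd (le_abs_self x) h.not_ge
end
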